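/- arXiv:2112.03120 — 2 statements merged into one kernel-verified Lean document; each statement's English description precedes it below -/
import Mathlib

section
/- There is an absolute constant K > 0 such that for every finite weighted graph G = (V, E, w) on n ≥ 2 vertices with positive integer edge weights and every ε ∈ (0,1), there exists a reweighted subgraph H of G with at most K · n · (log n)/ε² edges which is a (1±ε)-cut sparsifier of G. -/
open scoped Classical

/-- The edge `e` crosses the vertex set `A`, i.e. it has one endpoint in `A`
and the other outside `A`. -/
def Crosses {V : Type} (A : Set V) (e : Sym2 V) : Prop :=
  ∃ u v, e = s(u, v) ∧ u ∈ A ∧ v ∉ A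

/-- The weight of the cut induced by the partition `{A, Aᶜ}` in the edge set `E`
with weight function `w`. -/
noncomputable def cutWeight {V : Type} (E : Finset (Sym2 V)) (w : Sym2 V → ℝ) (A : Set V) : ℝ :=
  ∑ e ∈ E, if Crosses A e then w e else 0

/-!
The square of a difference of `A.indicator 1` along an edge tells whether the edge crosses `A`, so
it suffices to sparsify a sum of squares of linear forms. In an orthonormal basis of the range of
these forms such a sum becomes a decomposition of the identity `∑ e, vecMulVec (v e) (v e) = 1`,
and the barrier argument of Batson, Spielman and Srivastava applies: build `A` by adding multiples
of the `vecMulVec (v e) (v e)` one at a time, keeping its spectrum between a lower barrier `l` and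
an upper barrier `u` which both advance at each step, at almost equal speeds. The potentials
`tr (u • 1 - A)⁻¹` and `tr (A - l • 1)⁻¹` measure how close the spectrum comes to the barriers. By
the Sherman–Morrison formula, whether adding `t • vecMulVec v v` keeps them from growing depends on
`t` and two quadratic forms in `v` only, a cost for the upper barrier and a gain for the lower one.
Averaging over `e` turns these forms into traces, and as the mean gain exceeds the mean cost, some
`v e` is admissible at every step.
-/

open Matrix

section RankOneUpdate

variable {ι : Type*}

theorem posDef_add_smul_vecMulVec [Finite ι] {P : Matrix ι ι ℝ} (hP : P.PosDef) {t : ℝ}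
    (ht : 0 ≤ t) (v : ι → ℝ) : (P + t • vecMulVec v v).PosDef :=
  hP.add_posSemidef <| by simpa using (posSemidef_vecMulVec_self_star v).smul ht

variable [Fintype ι]

theorem dotProduct_vecMulVec_self_mulVec (v x : ι → ℝ) :
    x ⬝ᵥ vecMulVec v v *ᵥ x = (v ⬝ᵥ x) ^ 2 := by
  rw [vecMulVec_mulVec, op_smul_eq_smul, dotProduct_smul, dotProduct_comm x, smul_eq_mul, sq]

theorem dotProduct_linearCombination_vecMulVec_mulVec {α : Type*} [Fintype α]
    (v : α → ι → ℝ) (s : α →₀ ℝ) (x : ι → ℝ) :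
    x ⬝ᵥ Finsupp.linearCombination ℝ (fun e => vecMulVec (v e) (v e)) s *ᵥ x =
      ∑ e, s e * (v e ⬝ᵥ x) ^ 2 := by
  rw [Finsupp.linearCombination_apply, Finsupp.sum_fintype _ _ (by simp), sum_mulVec,
    dotProduct_sum]
  simp only [smul_mulVec, dotProduct_smul, dotProduct_vecMulVec_self_mulVec, smul_eq_mul]

variable [DecidableEq ι]

theorem inv_add_vecMulVec {K : Type*} [Field K] {A : Matrix ι ι K} (hA : IsUnit A) {u v : ι → K}
    (h : 1 + v ⬝ᵥ A⁻¹ *ᵥ u ≠ 0) :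
    (A + vecMulVec u v)⁻¹ =
      A⁻¹ - (1 + v ⬝ᵥ A⁻¹ *ᵥ u)⁻¹ • vecMulVec (A⁻¹ *ᵥ u) (v ᵥ* A⁻¹) := by
  have hdet : IsUnit A.det := (isUnit_iff_isUnit_det A).1 hA
  refine inv_eq_right_inv ?_
  rw [mul_sub, add_mul, mul_nonsing_inv _ hdet, vecMulVec_mul, mul_smul_comm, add_mul,
    mul_vecMulVec, mulVec_mulVec, mul_nonsing_inv _ hdet, one_mulVec, vecMulVec_mul_vecMulVec,
    vecMulVec_smul, ← one_smul K (vecMulVec u (v ᵥ* A⁻¹)), smul_smul _ 1, mul_one, ← add_smul,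
    smul_smul, inv_mul_cancel₀ h, add_sub_cancel_right]

theorem trace_inv_add_smul_vecMulVec {K : Type*} [Field K] {A : Matrix ι ι K} (hA : IsUnit A)
    {t : K} {u v : ι → K} (h : 1 + t * (v ⬝ᵥ A⁻¹ *ᵥ u) ≠ 0) :
    (A + t • vecMulVec u v)⁻¹.trace =
      A⁻¹.trace - t * (v ⬝ᵥ (A⁻¹ * A⁻¹) *ᵥ u) / (1 + t * (v ⬝ᵥ A⁻¹ *ᵥ u)) := by
  have hscalar : v ⬝ᵥ A⁻¹ *ᵥ (t • u) = t * (v ⬝ᵥ A⁻¹ *ᵥ u) := by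
    rw [mulVec_smul, dotProduct_smul, smul_eq_mul]
  rw [← smul_vecMulVec, inv_add_vecMulVec hA (hscalar ▸ h), hscalar, trace_sub, trace_smul,
    trace_vecMulVec, dotProduct_comm (A⁻¹ *ᵥ t • u) (v ᵥ* A⁻¹), ← dotProduct_mulVec, mulVec_smul,
    mulVec_smul, dotProduct_smul, mulVec_mulVec, smul_eq_mul, smul_eq_mul, inv_mul_eq_div]

theorem sq_dotProduct_le_mul_dotProduct_inv {P : Matrix ι ι ℝ} (hP : P.PosDef)
    (x y : ι → ℝ) : (x ⬝ᵥ y) ^ 2 ≤ (x ⬝ᵥ P *ᵥ x) * (y ⬝ᵥ P⁻¹ *ᵥ y) := by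
  have hdet : IsUnit P.det := (isUnit_iff_isUnit_det P).1 hP.isUnit
  have hsymm : (toBilin' P).IsSymm := isSymm_toBilin'_iff_isSymm.2 (isHermitian_iff_isSymm.1 hP.1)
  have hnonneg (z : ι → ℝ) : 0 ≤ toBilin' P z z := by
    simpa [toBilin'_apply'] using hP.posSemidef.dotProduct_mulVec_nonneg z
  have hcs := (toBilin' P).apply_mul_apply_le_of_forall_zero_le hnonneg x (P⁻¹ *ᵥ y)
  rwa [hsymm.eq (P⁻¹ *ᵥ y) x, ← sq, toBilin'_apply', toBilin'_apply', toBilin'_apply',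
    mulVec_mulVec, mul_nonsing_inv _ hdet, one_mulVec, dotProduct_comm (P⁻¹ *ᵥ y) y] at hcs

theorem posDef_sub_smul_vecMulVec {P : Matrix ι ι ℝ} (hP : P.PosDef) {t : ℝ} (ht : 0 ≤ t)
    {v : ι → ℝ} (hv : t * (v ⬝ᵥ P⁻¹ *ᵥ v) < 1) : (P - t • vecMulVec v v).PosDef := by
  have hherm : (t • vecMulVec v v).IsHermitian := by
    simpa using ((posSemidef_vecMulVec_self_star v).smul ht).1
  refine .of_dotProduct_mulVec_pos (hP.1.sub hherm) fun x hx => ?_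
  have hxP : 0 < x ⬝ᵥ P *ᵥ x := by simpa using hP.dotProduct_mulVec_pos hx
  have hlt : t * (v ⬝ᵥ x) ^ 2 < x ⬝ᵥ P *ᵥ x := calc
    t * (v ⬝ᵥ x) ^ 2 ≤ t * ((x ⬝ᵥ P *ᵥ x) * (v ⬝ᵥ P⁻¹ *ᵥ v)) := by
      rw [dotProduct_comm]
      gcongr
      exact sq_dotProduct_le_mul_dotProduct_inv hP x v
    _ = (x ⬝ᵥ P *ᵥ x) * (t * (v ⬝ᵥ P⁻¹ *ᵥ v)) := by ring
    _ < x ⬝ᵥ P *ᵥ x := mul_lt_of_lt_one_right hxP hv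
  simpa [sub_mulVec, smul_mulVec, dotProduct_sub, dotProduct_smul,
    dotProduct_vecMulVec_self_mulVec] using hlt

theorem dotProduct_self_le_mul_trace_inv {P : Matrix ι ι ℝ} (hP : P.PosDef) (x : ι → ℝ) :
    x ⬝ᵥ x ≤ (x ⬝ᵥ P *ᵥ x) * P⁻¹.trace := by
  rw [dotProduct, trace, Finset.mul_sum]
  refine Finset.sum_le_sum fun i _ => ?_
  simpa [sq] using sq_dotProduct_le_mul_dotProduct_inv hP x (Pi.single i 1)

theorem posDef_sub_smul_one {P : Matrix ι ι ℝ} (hP : P.PosDef) {δ : ℝ} (hδ : 0 ≤ δ)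
    (htr : δ * P⁻¹.trace < 1) : (P - δ • 1).PosDef := by
  refine .of_dotProduct_mulVec_pos (hP.1.sub (isHermitian_one.smul (.all δ))) fun x hx => ?_
  have hxP : 0 < x ⬝ᵥ P *ᵥ x := by simpa using hP.dotProduct_mulVec_pos hx
  have hlt : δ * (x ⬝ᵥ x) < x ⬝ᵥ P *ᵥ x := calc
    δ * (x ⬝ᵥ x) ≤ δ * ((x ⬝ᵥ P *ᵥ x) * P⁻¹.trace) := by
      gcongr
      exact dotProduct_self_le_mul_trace_inv hP x
    _ = (x ⬝ᵥ P *ᵥ x) * (δ * P⁻¹.trace) := by ring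
    _ < x ⬝ᵥ P *ᵥ x := mul_lt_of_lt_one_right hxP htr
  simpa [sub_mulVec, smul_mulVec, dotProduct_sub, dotProduct_smul] using hlt

end RankOneUpdate

section BarrierShift

theorem posDef_add_smul_one {ι : Type*} [Finite ι] [DecidableEq ι] {P : Matrix ι ι ℝ}
    (hP : P.PosDef) {δ : ℝ} (hδ : 0 ≤ δ) :
    (P + δ • 1).PosDef :=
  hP.add_posSemidef (PosSemidef.one.smul hδ)

variable {ι : Type*} [Fintype ι]

theorem trace_mul_mul_nonneg {M N : Matrix ι ι ℝ} (hM : M.PosSemidef) (hN : N.IsHermitian) :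
    0 ≤ (N * M * N).trace := by
  simpa only [hN.eq] using (hM.mul_mul_conjTranspose_same N).trace_nonneg

theorem sq_trace_mul_le {M N : Matrix ι ι ℝ} (hM : M.PosSemidef) (hN : N.IsHermitian) :
    (N * M).trace ^ 2 ≤ M.trace * (N * M * N).trace := by
  have hquad (x : ℝ) :
      0 ≤ M.trace * (x * x) + -2 * (N * M).trace * x + (N * M * N).trace := by
    have h := trace_mul_mul_nonneg hM (hN.sub (isHermitian_one.smul (.all x)))
    simp only [sub_mul, mul_sub, smul_mul_assoc, mul_smul_comm, one_mul, mul_one, trace_sub,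
      trace_smul, smul_eq_mul, trace_mul_comm M N] at h
    linarith
  have h := discrim_le_zero hquad
  rw [discrim] at h
  linarith

variable [DecidableEq ι]

theorem dotProduct_mulVec_inv_nonneg {P : Matrix ι ι ℝ} (hP : P.PosDef) (v : ι → ℝ) :
    0 ≤ v ⬝ᵥ P⁻¹ *ᵥ v := by
  simpa using hP.inv.posSemidef.dotProduct_mulVec_nonneg v

theorem dotProduct_mulVec_inv_mul_inv_nonneg {P : Matrix ι ι ℝ} (hP : P.PosDef) (v : ι → ℝ) :
    0 ≤ v ⬝ᵥ (P⁻¹ * P⁻¹) *ᵥ v := by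
  simpa [sq] using (hP.inv.posSemidef.pow 2).dotProduct_mulVec_nonneg v

theorem mul_dotProduct_mulVec_inv_lt_one {P : Matrix ι ι ℝ} (hP : P.PosDef) {t g : ℝ}
    (ht : 0 ≤ t) (hg : 0 ≤ g) {v : ι → ℝ}
    (hv : t * (v ⬝ᵥ (g⁻¹ • (P⁻¹ * P⁻¹) + P⁻¹) *ᵥ v) < 1) : t * (v ⬝ᵥ P⁻¹ *ᵥ v) < 1 := by
  rw [add_mulVec, dotProduct_add, smul_mulVec, dotProduct_smul, smul_eq_mul, mul_add] at hv
  have hsq : 0 ≤ v ⬝ᵥ (P⁻¹ * P⁻¹) *ᵥ v := dotProduct_mulVec_inv_mul_inv_nonneg hP v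
  have : 0 ≤ t * (g⁻¹ * (v ⬝ᵥ (P⁻¹ * P⁻¹) *ᵥ v)) := by positivity
  linarith

theorem trace_inv_sub_smul_vecMulVec_le {P : Matrix ι ι ℝ} (hP : P.PosDef) {t g : ℝ}
    (ht : 0 ≤ t) (hg : 0 < g) {v : ι → ℝ}
    (hv : t * (v ⬝ᵥ (g⁻¹ • (P⁻¹ * P⁻¹) + P⁻¹) *ᵥ v) < 1) :
    (P - t • vecMulVec v v)⁻¹.trace ≤ P⁻¹.trace + g := by
  have hp : t * (v ⬝ᵥ P⁻¹ *ᵥ v) < 1 := mul_dotProduct_mulVec_inv_lt_one hP ht hg.le hv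
  rw [add_mulVec, dotProduct_add, smul_mulVec, dotProduct_smul, smul_eq_mul, mul_add] at hv
  set q := v ⬝ᵥ (P⁻¹ * P⁻¹) *ᵥ v
  set p := v ⬝ᵥ P⁻¹ *ᵥ v
  have hcost : t * q / (1 - t * p) ≤ g := by
    rw [div_le_iff₀ (by linarith), ← div_le_iff₀' hg]
    calc t * q / g = t * (g⁻¹ * q) := by ring
      _ ≤ 1 - t * p := by linarith
  calc (P - t • vecMulVec v v)⁻¹.trace = P⁻¹.trace - -t * q / (1 + -t * p) := by
        rw [sub_eq_add_neg, ← neg_smul, trace_inv_add_smul_vecMulVec hP.isUnit (by linarith)]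
    _ = P⁻¹.trace + t * q / (1 - t * p) := by ring
    _ ≤ P⁻¹.trace + g := by gcongr

theorem trace_inv_add_smul_vecMulVec_le {P : Matrix ι ι ℝ} (hP : P.PosDef) {t g : ℝ}
    (ht : 0 ≤ t) (hg : 0 < g) {v : ι → ℝ}
    (hv : 1 ≤ t * (v ⬝ᵥ (g⁻¹ • (P⁻¹ * P⁻¹) - P⁻¹) *ᵥ v)) :
    (P + t • vecMulVec v v)⁻¹.trace ≤ P⁻¹.trace - g := by
  rw [sub_mulVec, dotProduct_sub, smul_mulVec, dotProduct_smul, smul_eq_mul, mul_sub] at hv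
  have hp : 0 ≤ v ⬝ᵥ P⁻¹ *ᵥ v := dotProduct_mulVec_inv_nonneg hP v
  have hpos : 0 < 1 + t * (v ⬝ᵥ P⁻¹ *ᵥ v) := by positivity
  rw [trace_inv_add_smul_vecMulVec hP.isUnit hpos.ne']
  gcongr
  rw [le_div_iff₀ hpos, ← le_div_iff₀' hg]
  calc 1 + t * (v ⬝ᵥ P⁻¹ *ᵥ v) ≤ t * (g⁻¹ * (v ⬝ᵥ (P⁻¹ * P⁻¹) *ᵥ v)) := by linarith
    _ = t * (v ⬝ᵥ (P⁻¹ * P⁻¹) *ᵥ v) / g := by ring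

theorem inv_sub_inv_add_smul_one {P : Matrix ι ι ℝ} (hP : P.PosDef) {δ : ℝ} (hδ : 0 ≤ δ) :
    P⁻¹ - (P + δ • 1)⁻¹ = δ • (P⁻¹ * (P + δ • 1)⁻¹) := by
  rw [Matrix.inv_sub_inv (iff_of_true hP.isUnit (posDef_add_smul_one hP hδ).isUnit),
    add_sub_cancel_left, mul_smul_comm, mul_one, smul_mul_assoc]

theorem trace_inv_sub_trace_inv_add_smul_one {P : Matrix ι ι ℝ} (hP : P.PosDef) {δ : ℝ}
    (hδ : 0 ≤ δ) : P⁻¹.trace - (P + δ • 1)⁻¹.trace = δ * (P⁻¹ * (P + δ • 1)⁻¹).trace := by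
  rw [← trace_sub, inv_sub_inv_add_smul_one hP hδ, trace_smul, smul_eq_mul]

theorem mul_trace_inv_add_smul_one_sq_le {P : Matrix ι ι ℝ} (hP : P.PosDef) {δ : ℝ}
    (hδ : 0 ≤ δ) :
    δ * ((P + δ • 1)⁻¹ * (P + δ • 1)⁻¹).trace ≤ P⁻¹.trace - (P + δ • 1)⁻¹.trace := by
  have hQ := (posDef_add_smul_one hP hδ).inv
  have hres := inv_sub_inv_add_smul_one hP hδ
  rw [trace_inv_sub_trace_inv_add_smul_one hP hδ]
  set R := P⁻¹
  set M := (P + δ • 1)⁻¹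
  have hdiff : (R * M).trace - (M * M).trace = δ * (M * R * M).trace := by
    rw [← trace_sub, ← sub_mul, hres, smul_mul_assoc, trace_smul, trace_mul_cycle, smul_eq_mul]
  have hnonneg : 0 ≤ δ * (M * R * M).trace :=
    mul_nonneg hδ (trace_mul_mul_nonneg hP.inv.posSemidef hQ.1)
  gcongr
  linarith

theorem trace_inv_sub_add_mul_sq_le {P : Matrix ι ι ℝ} (hP : P.PosDef) {δ : ℝ} (hδ : 0 ≤ δ)
    (htr : δ * (P + δ • 1)⁻¹.trace ≤ 1) :
    P⁻¹.trace - (P + δ • 1)⁻¹.trace + δ * (P⁻¹.trace - (P + δ • 1)⁻¹.trace) ^ 2 ≤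
      δ * (P⁻¹ * P⁻¹).trace := by
  have hQ := (posDef_add_smul_one hP hδ).inv
  have hres := inv_sub_inv_add_smul_one hP hδ
  rw [trace_inv_sub_trace_inv_add_smul_one hP hδ]
  set R := P⁻¹
  set M := (P + δ • 1)⁻¹
  have hdiff : (R * R).trace - (R * M).trace = δ * (R * M * R).trace := by
    rw [← trace_sub, ← mul_sub, hres, mul_smul_comm, trace_smul, trace_mul_comm R, smul_eq_mul]
  have hcs : δ * (R * M).trace ^ 2 ≤ (R * M * R).trace := calc
    δ * (R * M).trace ^ 2 ≤ δ * (M.trace * (R * M * R).trace) := by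
      gcongr
      exact sq_trace_mul_le hQ.posSemidef hP.inv.1
    _ = δ * M.trace * (R * M * R).trace := by ring
    _ ≤ (R * M * R).trace :=
      mul_le_of_le_one_left (trace_mul_mul_nonneg hQ.posSemidef hP.inv.1) htr
  calc δ * (R * M).trace + δ * (δ * (R * M).trace) ^ 2
      = δ * ((R * M).trace + δ * (δ * (R * M).trace ^ 2)) := by ring
    _ ≤ δ * ((R * M).trace + δ * (R * M * R).trace) := by gcongr
    _ = δ * (R * R).trace := by rw [← hdiff]; ring

theorem trace_inv_add_smul_one_lt [Nonempty ι] {P : Matrix ι ι ℝ} (hP : P.PosDef) {δ : ℝ}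
    (hδ : 0 < δ) : (P + δ • 1)⁻¹.trace < P⁻¹.trace := by
  have hQ := (posDef_add_smul_one hP hδ.le).inv
  have hsq : 0 < ((P + δ • 1)⁻¹ * (P + δ • 1)⁻¹).trace := by
    simpa only [mul_one, hQ.1.eq] using (PosDef.one.mul_mul_conjTranspose_same
      (vecMul_injective_iff_isUnit.2 hQ.isUnit)).trace_pos
  have := mul_trace_inv_add_smul_one_sq_le hP hδ.le
  nlinarith [mul_pos hδ hsq]

/-- The matrix of the quadratic form which assigns to `v` the cost of a rank-one update along `v`
for the upper barrier: if `A` has slack `P = u • 1 - A` and the barrier `u` moves up by `δ`, then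
adding `t • vecMulVec v v` to `A` does not increase the trace of the inverse slack as soon as `t`
times the cost is less than `1`. -/
noncomputable def upperBarrierCost (P : Matrix ι ι ℝ) (δ : ℝ) : Matrix ι ι ℝ :=
  (P⁻¹.trace - (P + δ • 1)⁻¹.trace)⁻¹ • ((P + δ • 1)⁻¹ * (P + δ • 1)⁻¹) + (P + δ • 1)⁻¹

/-- The matrix of the quadratic form which assigns to `v` the gain of a rank-one update along `v`
for the lower barrier: if `A` has slack `P = A - l • 1` and the barrier `l` moves up by `δ`, then
adding `t • vecMulVec v v` to `A` brings the trace of the inverse slack back to at most its old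
value as soon as `t` times the gain is at least `1`. -/
noncomputable def lowerBarrierGain (P : Matrix ι ι ℝ) (δ : ℝ) : Matrix ι ι ℝ :=
  ((P - δ • 1)⁻¹.trace - P⁻¹.trace)⁻¹ • ((P - δ • 1)⁻¹ * (P - δ • 1)⁻¹) - (P - δ • 1)⁻¹

theorem trace_upperBarrierCost_le [Nonempty ι] {P : Matrix ι ι ℝ} (hP : P.PosDef) {δ : ℝ}
    (hδ : 0 < δ) : (upperBarrierCost P δ).trace ≤ δ⁻¹ + P⁻¹.trace := by
  have hgap := sub_pos.2 (trace_inv_add_smul_one_lt hP hδ)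
  rw [upperBarrierCost, trace_add, trace_smul, smul_eq_mul]
  gcongr
  · rw [inv_mul_le_iff₀ hgap, mul_comm, ← inv_mul_le_iff₀ (inv_pos.2 hδ), inv_inv]
    exact mul_trace_inv_add_smul_one_sq_le hP hδ.le
  · exact (trace_inv_add_smul_one_lt hP hδ).le

theorem trace_inv_lt_trace_inv_sub_smul_one [Nonempty ι] {P : Matrix ι ι ℝ} (hP : P.PosDef)
    {δ : ℝ} (hδ : 0 < δ) (htr : δ * P⁻¹.trace < 1) : P⁻¹.trace < (P - δ • 1)⁻¹.trace := by
  simpa using trace_inv_add_smul_one_lt (posDef_sub_smul_one hP hδ.le htr) hδ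

theorem le_trace_lowerBarrierGain [Nonempty ι] {P : Matrix ι ι ℝ} (hP : P.PosDef) {δ : ℝ}
    (hδ : 0 < δ) (htr : δ * P⁻¹.trace < 1) :
    δ⁻¹ - P⁻¹.trace ≤ (lowerBarrierGain P δ).trace := by
  have hgap := sub_pos.2 (trace_inv_lt_trace_inv_sub_smul_one hP hδ htr)
  have hsq := trace_inv_sub_add_mul_sq_le (posDef_sub_smul_one hP hδ.le htr) hδ.le
    (by simpa using htr.le)
  rw [sub_add_cancel] at hsq
  rw [lowerBarrierGain, trace_sub, trace_smul, smul_eq_mul]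
  set g := (P - δ • 1)⁻¹.trace - P⁻¹.trace
  have hquot : δ⁻¹ + g ≤ g⁻¹ * ((P - δ • 1)⁻¹ * (P - δ • 1)⁻¹).trace := by
    rw [inv_mul_eq_div, le_div_iff₀ hgap]
    refine le_of_mul_le_mul_left ?_ hδ
    calc δ * ((δ⁻¹ + g) * g) = g + δ * g ^ 2 := by field_simp
      _ ≤ _ := hsq
  linarith

theorem dotProduct_upperBarrierCost_mulVec_nonneg [Nonempty ι] {P : Matrix ι ι ℝ} (hP : P.PosDef)
    {δ : ℝ} (hδ : 0 < δ) (v : ι → ℝ) : 0 ≤ v ⬝ᵥ upperBarrierCost P δ *ᵥ v := by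
  have hQ := posDef_add_smul_one hP hδ.le
  have hgap := sub_pos.2 (trace_inv_add_smul_one_lt hP hδ)
  rw [upperBarrierCost, add_mulVec, dotProduct_add, smul_mulVec, dotProduct_smul, smul_eq_mul]
  exact add_nonneg
    (mul_nonneg (inv_nonneg.2 hgap.le) (dotProduct_mulVec_inv_mul_inv_nonneg hQ v))
    (dotProduct_mulVec_inv_nonneg hQ v)

theorem posDef_and_trace_inv_le_of_mul_upperBarrierCost_lt_one [Nonempty ι] {P : Matrix ι ι ℝ}
    (hP : P.PosDef) {δ t : ℝ} (hδ : 0 < δ) (ht : 0 ≤ t) {v : ι → ℝ}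
    (hv : t * (v ⬝ᵥ upperBarrierCost P δ *ᵥ v) < 1) :
    (P + δ • 1 - t • vecMulVec v v).PosDef ∧
      (P + δ • 1 - t • vecMulVec v v)⁻¹.trace ≤ P⁻¹.trace := by
  have hQ := posDef_add_smul_one hP hδ.le
  have hgap := sub_pos.2 (trace_inv_add_smul_one_lt hP hδ)
  exact ⟨posDef_sub_smul_vecMulVec hQ ht (mul_dotProduct_mulVec_inv_lt_one hQ ht hgap.le hv),
    (trace_inv_sub_smul_vecMulVec_le hQ ht hgap hv).trans_eq (add_sub_cancel _ _)⟩

theorem posDef_and_trace_inv_le_of_one_le_mul_lowerBarrierGain [Nonempty ι] {P : Matrix ι ι ℝ}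
    (hP : P.PosDef) {δ t : ℝ} (hδ : 0 < δ) (htr : δ * P⁻¹.trace < 1) (ht : 0 ≤ t) {v : ι → ℝ}
    (hv : 1 ≤ t * (v ⬝ᵥ lowerBarrierGain P δ *ᵥ v)) :
    (P - δ • 1 + t • vecMulVec v v).PosDef ∧
      (P - δ • 1 + t • vecMulVec v v)⁻¹.trace ≤ P⁻¹.trace := by
  have hQ := posDef_sub_smul_one hP hδ.le htr
  have hgap := sub_pos.2 (trace_inv_lt_trace_inv_sub_smul_one hP hδ htr)
  exact ⟨posDef_add_smul_vecMulVec hQ ht v,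
    (trace_inv_add_smul_vecMulVec_le hQ ht hgap hv).trans_eq (sub_sub_cancel _ _)⟩

end BarrierShift

section Sparsification

variable {ι α : Type*} [Fintype ι] [DecidableEq ι]

/-- The invariant of the Batson–Spielman–Srivastava iteration: the spectrum of `A` lies strictly
between the barriers `l` and `u`, at a distance controlled by the potentials
`tr (u • 1 - A)⁻¹ ≤ η` and `tr (A - l • 1)⁻¹ ≤ η`. -/
structure IsBarrierBounded (η l u : ℝ) (A : Matrix ι ι ℝ) : Prop where
  posDef_upper : (u • 1 - A).PosDef
  trace_upper_le : (u • 1 - A)⁻¹.trace ≤ η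
  posDef_lower : (A - l • 1).PosDef
  trace_lower_le : (A - l • 1)⁻¹.trace ≤ η

theorem IsBarrierBounded.mul_dotProduct_self_le {η l u : ℝ} {A : Matrix ι ι ℝ}
    (hA : IsBarrierBounded η l u A) (y : ι → ℝ) : l * (y ⬝ᵥ y) ≤ y ⬝ᵥ A *ᵥ y := by
  simpa [sub_mulVec, smul_mulVec] using hA.posDef_lower.posSemidef.dotProduct_mulVec_nonneg y

theorem IsBarrierBounded.le_mul_dotProduct_self {η l u : ℝ} {A : Matrix ι ι ℝ}
    (hA : IsBarrierBounded η l u A) (y : ι → ℝ) : y ⬝ᵥ A *ᵥ y ≤ u * (y ⬝ᵥ y) := by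
  simpa [sub_mulVec, smul_mulVec] using hA.posDef_upper.posSemidef.dotProduct_mulVec_nonneg y

theorem isBarrierBounded_zero [Nonempty ι] {η : ℝ} (hη : 0 < η) :
    IsBarrierBounded η (-(Fintype.card ι / η)) (Fintype.card ι / η) (0 : Matrix ι ι ℝ) := by
  have hcard : (0 : ℝ) < Fintype.card ι := by exact_mod_cast Fintype.card_pos
  have hr : 0 < Fintype.card ι / η := div_pos hcard hη
  have hpos : ((Fintype.card ι / η) • (1 : Matrix ι ι ℝ)).PosDef := PosDef.one.smul hr
  have hinv : ((Fintype.card ι / η) • (1 : Matrix ι ι ℝ))⁻¹ = (Fintype.card ι / η)⁻¹ • 1 :=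
    inv_eq_right_inv <| by
      rw [smul_mul_smul_comm, mul_inv_cancel₀ hr.ne', one_mul, one_smul]
  have htr : ((Fintype.card ι / η) • (1 : Matrix ι ι ℝ))⁻¹.trace = η := by
    rw [hinv, trace_smul, trace_one, smul_eq_mul, inv_div, div_mul_cancel₀ _ hcard.ne']
  constructor <;> simp only [sub_zero, zero_sub, neg_smul, neg_neg, hpos, htr.le]

theorem IsBarrierBounded.add_smul_vecMulVec [Nonempty ι] {A : Matrix ι ι ℝ}
    {η l u δL δU t : ℝ} (hA : IsBarrierBounded η l u A) (hδL : 0 < δL) (hδU : 0 < δU)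
    (htr : δL * (A - l • 1)⁻¹.trace < 1) (ht : 0 ≤ t) {x : ι → ℝ}
    (hcost : t * (x ⬝ᵥ upperBarrierCost (u • 1 - A) δU *ᵥ x) < 1)
    (hgain : 1 ≤ t * (x ⬝ᵥ lowerBarrierGain (A - l • 1) δL *ᵥ x)) :
    IsBarrierBounded η (l + δL) (u + δU) (A + t • vecMulVec x x) := by
  have hU : (u + δU) • 1 - (A + t • vecMulVec x x) =
      u • 1 - A + δU • 1 - t • vecMulVec x x := by module
  have hL : A + t • vecMulVec x x - (l + δL) • 1 =
      A - l • 1 - δL • 1 + t • vecMulVec x x := by module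
  obtain ⟨hUpos, hUtr⟩ :=
    posDef_and_trace_inv_le_of_mul_upperBarrierCost_lt_one hA.posDef_upper hδU ht hcost
  obtain ⟨hLpos, hLtr⟩ :=
    posDef_and_trace_inv_le_of_one_le_mul_lowerBarrierGain hA.posDef_lower hδL htr ht hgain
  rw [← hU] at hUpos hUtr
  rw [← hL] at hLpos hLtr
  exact ⟨hUpos, hUtr.trans hA.trace_upper_le, hLpos, hLtr.trans hA.trace_lower_le⟩

variable [Fintype α] {v : α → ι → ℝ}

theorem sum_dotProduct_mulVec_eq_trace (hv : ∑ e, vecMulVec (v e) (v e) = 1)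
    (M : Matrix ι ι ℝ) : ∑ e, v e ⬝ᵥ M *ᵥ v e = M.trace := by
  calc ∑ e, v e ⬝ᵥ M *ᵥ v e = ∑ e, (M * vecMulVec (v e) (v e)).trace := by
        simp only [mul_vecMulVec, trace_vecMulVec, dotProduct_comm]
    _ = M.trace := by rw [← trace_sum, ← Finset.mul_sum, hv, mul_one]

theorem sum_sq_dotProduct_eq_dotProduct_self (hv : ∑ e, vecMulVec (v e) (v e) = 1)
    (y : ι → ℝ) : ∑ e, (v e ⬝ᵥ y) ^ 2 = y ⬝ᵥ y := by
  simp only [← dotProduct_vecMulVec_self_mulVec, ← dotProduct_sum, ← sum_mulVec, hv, one_mulVec]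

theorem exists_dotProduct_mulVec_lt_of_trace_lt (hv : ∑ e, vecMulVec (v e) (v e) = 1)
    {M N : Matrix ι ι ℝ} (h : M.trace < N.trace) :
    ∃ e, v e ⬝ᵥ M *ᵥ v e < v e ⬝ᵥ N *ᵥ v e := by
  rw [← sum_dotProduct_mulVec_eq_trace hv, ← sum_dotProduct_mulVec_eq_trace hv] at h
  obtain ⟨e, -, he⟩ := Finset.exists_lt_of_sum_lt h
  exact ⟨e, he⟩

theorem IsBarrierBounded.exists_add_smul_vecMulVec [Nonempty ι] {A : Matrix ι ι ℝ}
    {η l u δL δU : ℝ} (hA : IsBarrierBounded η l u A)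
    (hv : ∑ e, vecMulVec (v e) (v e) = 1) (hη : 0 ≤ η) (hδL : 0 < δL) (hδU : 0 < δU)
    (hδ : δU⁻¹ + 2 * η < δL⁻¹) :
    ∃ e, ∃ t : ℝ, 0 ≤ t ∧ IsBarrierBounded η (l + δL) (u + δU) (A + t • vecMulVec (v e) (v e)) := by
  have htr : δL * (A - l • 1)⁻¹.trace < 1 := by
    rw [← lt_div_iff₀' hδL, one_div]
    linarith [inv_pos.2 hδU, hA.trace_lower_le]
  have hlt : (upperBarrierCost (u • 1 - A) δU).trace < (lowerBarrierGain (A - l • 1) δL).trace :=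
    calc (upperBarrierCost (u • 1 - A) δU).trace
        ≤ δU⁻¹ + (u • 1 - A)⁻¹.trace := trace_upperBarrierCost_le hA.posDef_upper hδU
      _ < δL⁻¹ - (A - l • 1)⁻¹.trace := by linarith [hA.trace_upper_le, hA.trace_lower_le]
      _ ≤ (lowerBarrierGain (A - l • 1) δL).trace :=
        le_trace_lowerBarrierGain hA.posDef_lower hδL htr
  obtain ⟨e, he⟩ := exists_dotProduct_mulVec_lt_of_trace_lt hv hlt
  have hgain := (dotProduct_upperBarrierCost_mulVec_nonneg hA.posDef_upper hδU (v e)).trans_lt he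
  refine ⟨e, (v e ⬝ᵥ lowerBarrierGain (A - l • 1) δL *ᵥ v e)⁻¹, inv_nonneg.2 hgain.le,
    hA.add_smul_vecMulVec hδL hδU htr (inv_nonneg.2 hgain.le) ?_ ?_⟩
  · rwa [inv_mul_lt_iff₀ hgain, mul_one]
  · rw [inv_mul_cancel₀ hgain.ne']

theorem exists_isBarrierBounded_linearCombination [Nonempty ι]
    (hv : ∑ e, vecMulVec (v e) (v e) = 1) {η δL δU : ℝ} (hη : 0 < η) (hδL : 0 < δL)
    (hδU : 0 < δU) (hδ : δU⁻¹ + 2 * η < δL⁻¹) (N : ℕ) :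
    ∃ s : α →₀ ℝ, 0 ≤ s ∧ s.support.card ≤ N ∧
      IsBarrierBounded η (N * δL - Fintype.card ι / η) (N * δU + Fintype.card ι / η)
        (Finsupp.linearCombination ℝ (fun e => vecMulVec (v e) (v e)) s) := by
  induction N with
  | zero => exact ⟨0, le_rfl, by simp, by simpa using isBarrierBounded_zero hη⟩
  | succ N ih =>
    obtain ⟨s, hs, hcard, hA⟩ := ih
    obtain ⟨e, t, ht, hA'⟩ := hA.exists_add_smul_vecMulVec hv hη.le hδL hδU hδ
    refine ⟨s + Finsupp.single e t, add_nonneg hs (Finsupp.single_nonneg.2 ht), ?_, ?_⟩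
    · calc (s + Finsupp.single e t).support.card
          ≤ (s.support ∪ (Finsupp.single e t).support).card :=
            Finset.card_le_card Finsupp.support_add
        _ ≤ s.support.card + (Finsupp.single e t).support.card := Finset.card_union_le _ _
        _ ≤ N + 1 :=
          add_le_add hcard (Finset.card_le_card Finsupp.support_single_subset)
    · rw [map_add, Finsupp.linearCombination_single]
      convert hA' using 1 <;> push_cast <;> ring

theorem inv_one_add_add_two_mul_lt_inv_one_sub {η : ℝ} (hη : 0 < η) (hη' : η < 1) :
    (1 + η)⁻¹ + 2 * η < (1 - η)⁻¹ := by
  have hsub : 0 < 1 - η := sub_pos.2 hη'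
  have hsq : 0 < 1 - η ^ 2 := by nlinarith
  have hgap : (1 - η)⁻¹ - (1 + η)⁻¹ = 2 * η / (1 - η ^ 2) := by
    rw [inv_sub_inv hsub.ne' (by positivity)]
    ring
  have hlt : 2 * η < 2 * η / (1 - η ^ 2) := by
    rw [lt_div_iff₀ hsq]
    nlinarith [pow_pos hη 3]
  linarith

theorem natCeil_four_mul_div_sq_le {a ε : ℝ} (ha : 1 ≤ a) (hε : 0 < ε) (hε' : ε ≤ 1) :
    ⌈4 * a / ε ^ 2⌉₊ ≤ 5 * a / ε ^ 2 := calc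
  (⌈4 * a / ε ^ 2⌉₊ : ℝ) ≤ 4 * a / ε ^ 2 + 1 := (Nat.ceil_lt_add_one (by positivity)).le
  _ ≤ 4 * a / ε ^ 2 + a / ε ^ 2 := by
    gcongr
    rw [one_le_div (by positivity)]
    exact (pow_le_one₀ hε.le hε').trans ha
  _ = 5 * a / ε ^ 2 := by ring

theorem exists_sparse_reweighting_of_sum_vecMulVec_eq_one (hv : ∑ e, vecMulVec (v e) (v e) = 1)
    {ε : ℝ} (hε : 0 < ε) (hε' : ε < 1) :
    ∃ s : α →₀ ℝ, 0 ≤ s ∧ s.support.card ≤ 5 * Fintype.card ι / ε ^ 2 ∧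
      ∀ y, (1 - ε) * (y ⬝ᵥ y) ≤ ∑ e, s e * (v e ⬝ᵥ y) ^ 2 ∧
        ∑ e, s e * (v e ⬝ᵥ y) ^ 2 ≤ (1 + ε) * (y ⬝ᵥ y) := by
  rcases isEmpty_or_nonempty ι with hι | hι
  · exact ⟨0, le_rfl, by simp, fun y => by simp [dotProduct]⟩
  have hcard : (1 : ℝ) ≤ Fintype.card ι := by exact_mod_cast Fintype.card_pos
  set n := (Fintype.card ι : ℝ)
  set N := ⌈4 * n / ε ^ 2⌉₊
  have hNge : 4 * n / ε ^ 2 ≤ N := Nat.le_ceil _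
  have hNpos : (0 : ℝ) < N := lt_of_lt_of_le (by positivity) hNge
  -- With `η = ε / 2` and steps `1 ∓ η`, the final barriers are `N * (1 ∓ η) ∓ n / η`; they lie
  -- between `N * (1 - ε)` and `N * (1 + ε)` once `n / η ≤ N * η`, that is, `4 * n / ε ^ 2 ≤ N`.
  have hoffset : n / (ε / 2) ≤ N * (ε / 2) := by
    rw [div_le_iff₀ (by positivity)] at hNge ⊢
    linarith
  have hδ : (1 + ε / 2)⁻¹ + 2 * (ε / 2) < (1 - ε / 2)⁻¹ :=
    inv_one_add_add_two_mul_lt_inv_one_sub (half_pos hε) (by linarith)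
  obtain ⟨s, hs, hsN, hA⟩ := exists_isBarrierBounded_linearCombination hv (half_pos hε)
    (δL := 1 - ε / 2) (δU := 1 + ε / 2) (by linarith) (by linarith) hδ N
  have hscale (y : ι → ℝ) : ∑ e, ((N : ℝ)⁻¹ • s) e * (v e ⬝ᵥ y) ^ 2 =
      (y ⬝ᵥ Finsupp.linearCombination ℝ (fun e => vecMulVec (v e) (v e)) s *ᵥ y) / N := by
    rw [dotProduct_linearCombination_vecMulVec_mulVec, div_eq_inv_mul, Finset.mul_sum]
    simp only [Finsupp.smul_apply, smul_eq_mul, mul_assoc]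
  refine ⟨(N : ℝ)⁻¹ • s, smul_nonneg (by positivity) hs, ?_, fun y => ?_⟩
  · calc (((N : ℝ)⁻¹ • s).support.card : ℝ) ≤ N := by
          exact Nat.cast_le.2 ((Finset.card_le_card Finsupp.support_smul).trans hsN)
      _ ≤ 5 * n / ε ^ 2 := natCeil_four_mul_div_sq_le hcard hε hε'.le
  · have hyy : 0 ≤ y ⬝ᵥ y := by simpa using dotProduct_star_self_nonneg y
    rw [hscale, le_div_iff₀ hNpos, div_le_iff₀ hNpos]
    constructor
    · calc (1 - ε) * (y ⬝ᵥ y) * N = (N * (1 - ε / 2) - N * (ε / 2)) * (y ⬝ᵥ y) := by ring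
        _ ≤ (N * (1 - ε / 2) - n / (ε / 2)) * (y ⬝ᵥ y) := by gcongr
        _ ≤ _ := hA.mul_dotProduct_self_le y
    · calc _ ≤ (N * (1 + ε / 2) + n / (ε / 2)) * (y ⬝ᵥ y) := hA.le_mul_dotProduct_self y
        _ ≤ (N * (1 + ε / 2) + N * (ε / 2)) * (y ⬝ᵥ y) := by gcongr
        _ = (1 + ε) * (y ⬝ᵥ y) * N := by ring

end Sparsification

section SumsOfSquares

variable {α W : Type*} [AddCommGroup W] [Module ℝ W] [FiniteDimensional ℝ W]

theorem exists_sum_vecMulVec_eq_one_and_dotProduct_eq [Fintype α] (ℓ : α → Module.Dual ℝ W) :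
    ∃ n ≤ Module.finrank ℝ W, ∃ v : α → Fin n → ℝ,
      ∑ e, vecMulVec (v e) (v e) = 1 ∧ ∀ x, ∃ y, ∀ e, v e ⬝ᵥ y = ℓ e x := by
  let T : W →ₗ[ℝ] EuclideanSpace ℝ α :=
    (WithLp.linearEquiv 2 ℝ (α → ℝ)).symm.toLinearMap ∘ₗ LinearMap.pi ℓ
  let b := stdOrthonormalBasis ℝ (LinearMap.range T)
  refine ⟨_, T.finrank_range_le, fun e i => (b i : EuclideanSpace ℝ α) e, ?_,
    fun x => ⟨b.repr ⟨T x, x, rfl⟩, fun e => ?_⟩⟩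
  · ext i j
    have h := orthonormal_iff_ite.1 b.orthonormal i j
    rw [Submodule.coe_inner, PiLp.inner_apply] at h
    rw [Matrix.sum_apply, one_apply, ← h]
    exact Finset.sum_congr rfl fun e _ => mul_comm _ _
  · have h := congrArg (EuclideanSpace.proj e ∘L (LinearMap.range T).subtypeL)
      (b.sum_repr ⟨T x, x, rfl⟩)
    rw [map_sum] at h
    simp only [map_smul, smul_eq_mul, mul_comm (b.repr _ _)] at h
    exact h

theorem exists_sparse_reweighting_sum_sq [Fintype α] (ℓ : α → Module.Dual ℝ W) {ε : ℝ}
    (hε : 0 < ε) (hε' : ε < 1) :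
    ∃ s : α →₀ ℝ, 0 ≤ s ∧ s.support.card ≤ 5 * Module.finrank ℝ W / ε ^ 2 ∧
      ∀ x, (1 - ε) * ∑ e, ℓ e x ^ 2 ≤ ∑ e, s e * ℓ e x ^ 2 ∧
        ∑ e, s e * ℓ e x ^ 2 ≤ (1 + ε) * ∑ e, ℓ e x ^ 2 := by
  obtain ⟨n, hn, v, hv, hy⟩ := exists_sum_vecMulVec_eq_one_and_dotProduct_eq ℓ
  obtain ⟨s, hs, hcard, hbound⟩ := exists_sparse_reweighting_of_sum_vecMulVec_eq_one hv hε hε'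
  refine ⟨s, hs, hcard.trans ?_, fun x => ?_⟩
  · rw [Fintype.card_fin]
    gcongr
  · obtain ⟨y, hy⟩ := hy x
    simpa only [← sum_sq_dotProduct_eq_dotProduct_self hv, hy] using hbound y

theorem exists_subset_reweighting_sum_sq (E : Finset α) {w : α → ℝ} (hw : ∀ e ∈ E, 0 ≤ w e)
    (ℓ : α → Module.Dual ℝ W) {ε : ℝ} (hε : 0 < ε) (hε' : ε < 1) :
    ∃ F ⊆ E, ∃ c : α → ℝ, (∀ e ∈ F, 0 < c e) ∧
      F.card ≤ 5 * Module.finrank ℝ W / ε ^ 2 ∧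
      ∀ x, (1 - ε) * ∑ e ∈ E, w e * ℓ e x ^ 2 ≤ ∑ e ∈ F, c e * ℓ e x ^ 2 ∧
        ∑ e ∈ F, c e * ℓ e x ^ 2 ≤ (1 + ε) * ∑ e ∈ E, w e * ℓ e x ^ 2 := by
  obtain ⟨s, hs, hcard, hbound⟩ :=
    exists_sparse_reweighting_sum_sq (fun e : E => √(w e) • ℓ e) hε hε'
  let c : α → ℝ := fun e => w e * s.extendDomain e
  have hc (e : E) : c e = w e * s e := by simp [c]
  have hcE (e : α) (he : e ∈ E) : 0 ≤ c e := by
    rw [hc ⟨e, he⟩]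
    exact mul_nonneg (hw e he) (hs ⟨e, he⟩)
  have hsq (x : W) (e : E) : (√(w e) • ℓ e) x ^ 2 = w e * ℓ e x ^ 2 := by
    rw [LinearMap.smul_apply, smul_eq_mul, mul_pow, Real.sq_sqrt (hw e e.2)]
  have hsumE (x : W) : ∑ e ∈ E, w e * ℓ e x ^ 2 = ∑ e : E, (√(w e) • ℓ e) x ^ 2 := by
    simp only [hsq, Finset.sum_coe_sort E fun e => w e * ℓ e x ^ 2]
  have hsumF (x : W) : ∑ e ∈ E with 0 < c e, c e * ℓ e x ^ 2 =
      ∑ e : E, s e * (√(w e) • ℓ e) x ^ 2 := calc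
    _ = ∑ e ∈ E, c e * ℓ e x ^ 2 := Finset.sum_filter_of_ne fun e he hne =>
      (hcE e he).lt_of_ne' (left_ne_zero_of_mul hne)
    _ = ∑ e : E, c e * ℓ e x ^ 2 := (Finset.sum_coe_sort E fun e => c e * ℓ e x ^ 2).symm
    _ = _ := by simp only [hc, hsq, mul_left_comm, mul_assoc]
  have hsub : {e ∈ E | 0 < c e} ⊆ s.support.map (.subtype _) := fun e he => by
    obtain ⟨heE, hpos⟩ := Finset.mem_filter.1 he
    rw [hc ⟨e, heE⟩] at hpos
    exact Finset.mem_map.2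
      ⟨⟨e, heE⟩, Finsupp.mem_support_iff.2 (right_ne_zero_of_mul hpos.ne'), rfl⟩
  refine ⟨{e ∈ E | 0 < c e}, Finset.filter_subset _ _, c, fun e he => (Finset.mem_filter.1 he).2,
    le_trans ?_ hcard, fun x => ?_⟩
  · exact_mod_cast (Finset.card_le_card hsub).trans_eq (Finset.card_map _)
  · rw [hsumE, hsumF]
    exact hbound x

end SumsOfSquares

section Cuts

variable {V : Type}

theorem crosses_mk_iff (A : Set V) (a b : V) :
    Crosses A s(a, b) ↔ (a ∈ A ∧ b ∉ A) ∨ (b ∈ A ∧ a ∉ A) := by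
  constructor
  · rintro ⟨u, v, h, hu, hv⟩
    rcases Sym2.eq_iff.1 h with ⟨rfl, rfl⟩ | ⟨rfl, rfl⟩
    exacts [.inl ⟨hu, hv⟩, .inr ⟨hu, hv⟩]
  · rintro (h | h)
    exacts [⟨a, b, rfl, h⟩, ⟨b, a, Sym2.eq_swap, h⟩]

/-- The difference `x u - x v` along the edge `e = s(u, v)` of a potential `x`, for an arbitrarily
chosen orientation of `e`; only its square, which does not depend on that choice, matters. -/
noncomputable def edgeDiff (e : Sym2 V) : Module.Dual ℝ (V → ℝ) :=
  LinearMap.proj (R := ℝ) (φ := fun _ => ℝ) (Quot.out e).1 - LinearMap.proj (Quot.out e).2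

theorem edgeDiff_indicator_sq (A : Set V) (e : Sym2 V) :
    edgeDiff e (A.indicator 1) ^ 2 = if Crosses A e then 1 else 0 := by
  have he : s((Quot.out e).1, (Quot.out e).2) = e := Quot.out_eq e
  have hcross := crosses_mk_iff A (Quot.out e).1 (Quot.out e).2
  rw [he] at hcross
  by_cases h₁ : (Quot.out e).1 ∈ A <;> by_cases h₂ : (Quot.out e).2 ∈ A <;>
    simp [edgeDiff, hcross, h₁, h₂]

theorem cutWeight_eq_sum_mul_edgeDiff_sq (E : Finset (Sym2 V)) (w : Sym2 V → ℝ) (A : Set V) :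
    cutWeight E w A = ∑ e ∈ E, w e * edgeDiff e (A.indicator 1) ^ 2 := by
  simp only [cutWeight, edgeDiff_indicator_sq, mul_ite, mul_one, mul_zero]

end Cuts

theorem le_two_mul_mul_log {x : ℝ} (hx : 2 ≤ x) : x ≤ 2 * x * Real.log x := by
  have hlog : 1 / 2 ≤ Real.log x := by
    linarith [Real.log_two_gt_d9, Real.log_le_log two_pos hx]
  nlinarith

theorem stmt_0_general (V : Type) [Fintype V] (E : Finset (Sym2 V)) (w : Sym2 V → ℝ)
    (hw : ∀ e ∈ E, 0 ≤ w e) (ε : ℝ) (hε : 0 < ε) (hε' : ε < 1) :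
    ∃ (EH : Finset (Sym2 V)) (wH : Sym2 V → ℝ),
      EH ⊆ E ∧ (∀ e ∈ EH, 0 < wH e) ∧
      (EH.card : ℝ) ≤ 5 * (Fintype.card V : ℝ) / ε ^ 2 ∧
      ∀ A : Set V,
        (1 - ε) * cutWeight E w A ≤ cutWeight EH wH A ∧
        cutWeight EH wH A ≤ (1 + ε) * cutWeight E w A := by
  obtain ⟨EH, hE, wH, hwH, hcard, hbound⟩ :=
    exists_subset_reweighting_sum_sq E hw edgeDiff hε hε'
  rw [Module.finrank_fintype_fun_eq_card] at hcard
  refine ⟨EH, wH, hE, hwH, hcard, fun A => ?_⟩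
  simpa only [cutWeight_eq_sum_mul_edgeDiff_sq] using hbound (A.indicator 1)

/-- **Existence of cut sparsifiers of size `O(n log n / ε²)`.**
There is an absolute constant `K > 0` such that every finite weighted graph
on `n ≥ 2` vertices with positive integer edge weights admits, for every
`ε ∈ (0,1)`, a reweighted subgraph with at most `K·n·log n/ε²` edges which is a
`(1±ε)`-cut sparsifier. -/
theorem stmt_0 :
    ∃ K : ℝ, 0 < K ∧
      ∀ (V : Type) [Fintype V] (E : Finset (Sym2 V)) (w : Sym2 V → ℤ),
        (∀ e ∈ E, ¬ e.IsDiag) →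
        (∀ e ∈ E, 0 < w e) →
        2 ≤ Fintype.card V →
        ∀ ε : ℝ, 0 < ε → ε < 1 →
          ∃ (EH : Finset (Sym2 V)) (wH : Sym2 V → ℝ),
            EH ⊆ E ∧
            (EH.card : ℝ) ≤ K * (Fintype.card V : ℝ) * Real.log (Fintype.card V) / ε ^ 2 ∧
            ∀ A : Set V, A.Nonempty → Aᶜ.Nonempty →
              (1 - ε) * cutWeight E (fun e => (w e : ℝ)) A ≤ cutWeight EH wH A ∧
              cutWeight EH wH A ≤ (1 + ε) * cutWeight E (fun e => (w e : ℝ)) A := by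
  refine ⟨10, by norm_num, fun V _ E w _ hw hV ε hε hε' => ?_⟩
  obtain ⟨EH, wH, hE, -, hcard, hcut⟩ := stmt_0_general V E (fun e => (w e : ℝ))
    (fun e he => by exact_mod_cast (hw e he).le) ε hε hε'
  refine ⟨EH, wH, hE, hcard.trans ?_, fun A _ _ => hcut A⟩
  gcongr ?_ / _
  linarith [le_two_mul_mul_log (x := Fintype.card V) (by exact_mod_cast hV)]
end

section
/- Let V be a finite set of n ≥ 2 vertices, and let R ⊆ Q be finite sets of edges on V with a weight function w satisfying 0 < w(e) ≤ 1 for all e ∈ Q. Assume that every edge e = (u,v) ∈ R is π-heavy in the weighted graph (V, Q, w), i.e., every cut of (V,Q) separating u and v has weight at least π. Suppose each edge e ∈ R is included, independently of all other edges, with probability p ∈ (0,1] in a random set R̂, and each included edge receives weight w(e)/p. For a cut C (determined by a partition of V into two nonempty parts), write r^{(C)} = ∑_{e ∈ R∩C} w(e), q^{(C)} = ∑_{e ∈ Q∩C} w(e), and r̂^{(C)} = ∑_{e ∈ R̂∩C} w(e)/p. Let ζ ≥ 5 be an integer and δ ∈ (0,1] a real number such that δ²·p·π ≥ ζ·ln(n)/0.38.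 Then with probability at least 1 − 4/n^{ζ−4}, simultaneously for all cuts C: |r^{(C)} − r̂^{(C)}| ≤ δ·q^{(C)}. -/
open scoped Classical
open MeasureTheory

/-- The weight of the cut induced by the partition `{A, Aᶜ}` in the edge set `E`. -/
noncomputable def cutW {V : Type} (E : Finset (Sym2 V)) (w : Sym2 V → ℝ) (A : Set V) : ℝ :=
  ∑ e ∈ E, if Crosses A e then w e else 0

/-- The Bernoulli measure on `Bool` with success probability `p`. -/
noncomputable def bernoulliMeasure (p : ℝ) : Measure Bool :=
  (ENNReal.ofReal p) • Measure.dirac true + (ENNReal.ofReal (1 - p)) • Measure.dirac false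

/-!
Only the trace of a cut on `R` matters for the deviation, and among the cuts with a given trace the
one of least weight `q` in `Q` is the most restrictive; the multiplicative Chernoff bound makes it
fail with probability at most `2 exp (-0.38 δ² p q) ≤ 2 n ^ (-ζ q / π)`. It remains to count traces.
The edges of `Q \ R` need not be heavy, so Karger's contraction argument does not apply directly:
first split off the edges at every vertex not incident to `R`. This preserves heaviness, increases
no cut, and leaves weight only on edges between vertices incident to `R`, each of which induces a
cut of weight at least `π`. Contracting a random edge now shows that at most `n ^ t` traces come
from cuts of weight at most `t π / 2`, and a union bound over the levels `⌊q / π⌋` finishes.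
-/

section Crossing

variable {V W : Type} {A B : Set V} {H : Set (Sym2 V)} {e : Sym2 V} {s u v : V}

theorem crosses_mk : Crosses A s(u, v) ↔ (u ∈ A ∧ v ∉ A) ∨ (v ∈ A ∧ u ∉ A) := by
  constructor
  · rintro ⟨a, b, h, ha, hb⟩
    rcases Sym2.eq_iff.1 h with ⟨rfl, rfl⟩ | ⟨rfl, rfl⟩
    exacts [Or.inl ⟨ha, hb⟩, Or.inr ⟨ha, hb⟩]
  · rintro (⟨hu, hv⟩ | ⟨hv, hu⟩)
    exacts [⟨u, v, rfl, hu, hv⟩, ⟨v, u, Sym2.eq_swap, hv, hu⟩]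

theorem Crosses.not_isDiag (h : Crosses A e) : ¬ e.IsDiag := by
  obtain ⟨u, v, rfl, hu, hv⟩ := h
  exact ne_of_mem_of_not_mem hu hv

theorem crosses_singleton_left (h : v ≠ u) : Crosses {u} s(u, v) :=
  ⟨u, v, rfl, rfl, h⟩

theorem crosses_compl : Crosses Aᶜ e ↔ Crosses A e := by
  induction e with | _ u v
  simp only [crosses_mk, Set.mem_compl_iff]
  tauto

theorem crosses_map {f : V → W} {A : Set W} : Crosses A (e.map f) ↔ Crosses (f ⁻¹' A) e := by
  induction e with | _ u v
  simp only [Sym2.map_mk, crosses_mk, Set.mem_preimage]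

/-- The pairs of `H` crossed by `A`: two vertex sets with the same trace induce the same cut
of `H`. -/
def cutTrace (H : Set (Sym2 V)) (A : Set V) : Set (Sym2 V) :=
  {e ∈ H | Crosses A e}

/-- The vertex set `A` separates the endpoints of some pair of `H`. -/
def Separates (H : Set (Sym2 V)) (A : Set V) : Prop :=
  (cutTrace H A).Nonempty

theorem separates_compl : Separates H Aᶜ ↔ Separates H A := by
  simp only [Separates, cutTrace, crosses_compl]

theorem Separates.of_union (h : Separates H (A ∪ B)) : Separates H A ∨ Separates H B := by
  obtain ⟨e, he, hcross⟩ := h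
  suffices Crosses A e ∨ Crosses B e from this.imp (⟨e, he, ·⟩) (⟨e, he, ·⟩)
  induction e with | _ u v
  simp only [crosses_mk, Set.mem_union] at *
  tauto

theorem Separates.inter_or_sdiff (h : Separates H A) (B : Set V) :
    Separates H (A ∩ B) ∨ Separates H (A \ B) :=
  Separates.of_union (by rwa [Set.inter_union_sdiff])

theorem Separates.sdiff_or_union (h : Separates H A) (B : Set V) :
    Separates H (B \ A) ∨ Separates H (A ∪ B) := by
  rw [← separates_compl] at h
  rw [← separates_compl (A := A ∪ B), Set.compl_union, Set.sdiff_eq, Set.inter_comm B]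
  simpa only [Set.sdiff_eq] using h.inter_or_sdiff B

theorem Separates.uncross (hA : Separates H A) (hB : Separates H B) :
    (Separates H (A ∩ B) ∧ Separates H (A ∪ B)) ∨
      (Separates H (A \ B) ∧ Separates H (B \ A)) := by
  have hA₁ := hA.inter_or_sdiff B
  have hB₁ := hB.inter_or_sdiff A
  have hA₂ := hA.sdiff_or_union B
  have hB₂ := hB.sdiff_or_union A
  rw [Set.inter_comm] at hB₁
  rw [Set.union_comm] at hB₂
  tauto

/-- The vertices incident to some pair of `H` that is not a loop. -/
def terminals (H : Set (Sym2 V)) : Set V :=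
  {v | Separates H {v}}

theorem left_mem_terminals (he : s(u, v) ∈ H) (h : v ≠ u) : u ∈ terminals H :=
  ⟨_, he, crosses_singleton_left h⟩

theorem right_mem_terminals (he : s(u, v) ∈ H) (h : u ≠ v) : v ∈ terminals H :=
  left_mem_terminals (Sym2.eq_swap ▸ he) h

theorem Separates.insert (hs : s ∉ terminals H) (hA : Separates H A) :
    Separates H (insert s A) := by
  obtain ⟨_, he, u, v, rfl, hu, hv⟩ := hA
  have hvs : v ≠ s := by
    rintro rfl
    exact hs (right_mem_terminals he (ne_of_mem_of_not_mem hu hv))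
  exact ⟨_, he, u, v, rfl, Or.inr hu, by simp [hvs, hv]⟩

theorem injOn_inter_terminals {F : Set (Set V)} (hF : F.InjOn (cutTrace H)) :
    F.InjOn (· ∩ terminals H) := by
  refine fun A hA B hB hAB => hF hA hB (Set.ext fun e => and_congr_right fun he => ?_)
  induction e with | _ u v
  rcases eq_or_ne u v with rfl | huv
  · simp only [crosses_mk]
    tauto
  have hmem : ∀ a ∈ terminals H, a ∈ A ↔ a ∈ B := fun a ha => by
    simpa only [Set.mem_inter_iff, ha, and_true] using Set.ext_iff.1 hAB a
  simp only [crosses_mk, hmem u (left_mem_terminals he huv.symm),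
    hmem v (right_mem_terminals he huv)]

theorem card_le_two_pow_ncard_terminals [Finite V] {F : Finset (Set V)}
    (hF : (F : Set (Set V)).InjOn (cutTrace H)) : F.card ≤ 2 ^ (terminals H).ncard := by
  rw [← Set.ncard_powerset _ (Set.toFinite _), ← Set.ncard_coe_finset]
  exact Set.ncard_le_ncard_of_injOn _ (fun A _ => Set.inter_subset_right)
    (injOn_inter_terminals hF) (Set.toFinite _)

end Crossing

section CutWeight

open Finset

variable {V : Type} {E F : Finset (Sym2 V)} {w : Sym2 V → ℝ} {A : Set V}

theorem cutW_compl : cutW E w Aᶜ = cutW E w A := by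
  simp only [cutW, crosses_compl]

theorem cutW_eq_sum_filter : cutW E w A = ∑ e ∈ E with Crosses A e, w e :=
  (sum_filter _ _).symm

theorem cutW_nonneg (hw : ∀ e ∈ E, 0 ≤ w e) : 0 ≤ cutW E w A := by
  rw [cutW_eq_sum_filter]
  exact sum_nonneg fun e he => hw e (mem_filter.1 he).1

theorem cutW_mono (hEF : E ⊆ F) (hw : ∀ e ∈ F, 0 ≤ w e) : cutW E w A ≤ cutW F w A := by
  simp only [cutW_eq_sum_filter]
  exact sum_le_sum_of_subset_of_nonneg (filter_subset_filter _ hEF)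
    fun e he _ => hw e (mem_filter.1 he).1

theorem cutW_le_sum (hw : ∀ e ∈ E, 0 ≤ w e) : cutW E w A ≤ ∑ e ∈ E, w e := by
  rw [cutW_eq_sum_filter]
  exact sum_le_sum_of_subset_of_nonneg (filter_subset _ _) fun e he _ => hw e he

theorem le_cutW_of_crosses {e : Sym2 V} (hw : ∀ e ∈ E, 0 ≤ w e) (he : e ∈ E)
    (hA : Crosses A e) : w e ≤ cutW E w A := by
  rw [cutW_eq_sum_filter]
  exact single_le_sum (fun f hf => hw f (mem_filter.1 hf).1) (mem_filter.2 ⟨he, hA⟩)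

theorem cutW_eq_zero_of_not_separates (hA : ¬ Separates E A) : cutW E w A = 0 :=
  sum_eq_zero fun e he => if_neg fun h => hA ⟨e, he, h⟩

theorem cutW_add (x y : Sym2 V → ℝ) : cutW E (x + y) A = cutW E x A + cutW E y A := by
  simp only [cutW_eq_sum_filter, Pi.add_apply, sum_add_distrib]

theorem cutW_smul (a : ℝ) (x : Sym2 V → ℝ) : cutW E (a • x) A = a * cutW E x A := by
  simp only [cutW_eq_sum_filter, Pi.smul_apply, smul_eq_mul, mul_sum]

theorem cutW_sub (x y : Sym2 V → ℝ) : cutW E (x - y) A = cutW E x A - cutW E y A := by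
  simp only [cutW_eq_sum_filter, Pi.sub_apply, sum_sub_distrib]

theorem continuous_cutW (E : Finset (Sym2 V)) (A : Set V) :
    Continuous fun x : Sym2 V → ℝ => cutW E x A := by
  simp only [cutW_eq_sum_filter]
  fun_prop

theorem cutW_inter_add_union_le (hw : ∀ e ∈ E, 0 ≤ w e) (A B : Set V) :
    cutW E w (A ∩ B) + cutW E w (A ∪ B) ≤ cutW E w A + cutW E w B := by
  simp only [cutW, ← sum_add_distrib]
  refine sum_le_sum fun e he => ?_
  have := hw e he
  induction e with | _ a b
  by_cases a ∈ A <;> by_cases b ∈ A <;> by_cases a ∈ B <;> by_cases b ∈ B <;>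
    simp [crosses_mk, *]

theorem cutW_sdiff_add_sdiff_lt (hw : ∀ e ∈ E, 0 ≤ w e) {A B : Set V} {s u : V}
    (hsu : s(s, u) ∈ E) (hpos : 0 < w s(s, u)) (huA : u ∈ A) (huB : u ∈ B) (hsA : s ∉ A)
    (hsB : s ∉ B) :
    cutW E w (A \ B) + cutW E w (B \ A) < cutW E w A + cutW E w B := by
  simp only [cutW, ← sum_add_distrib]
  refine sum_lt_sum (fun e he => ?_) ⟨s(s, u), hsu, by simp [crosses_mk, *]⟩
  have := hw e he
  induction e with | _ a b
  by_cases a ∈ A <;> by_cases b ∈ A <;> by_cases a ∈ B <;> by_cases b ∈ B <;>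
    simp [crosses_mk, *]

variable [Fintype V]

theorem cutW_indicator : cutW univ ((E : Set (Sym2 V)).indicator w) A = cutW E w A := by
  simp only [cutW_eq_sum_filter, Set.indicator_apply, mem_coe, ← sum_filter, filter_filter]
  refine sum_congr ?_ fun _ _ => rfl
  ext e
  simp [and_comm]

theorem cutW_indicator_compl_diagSet :
    cutW univ ((Sym2.diagSet : Set (Sym2 V))ᶜ.indicator w) A = cutW univ w A := by
  refine sum_congr rfl fun e _ => ?_
  split_ifs with h
  exacts [Set.indicator_of_mem h.not_isDiag w, rfl]

theorem cutW_single (e : Sym2 V) :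
    cutW univ (Pi.single e 1) A = if Crosses A e then 1 else 0 := by
  simp only [cutW_eq_sum_filter, sum_pi_single', mem_filter, mem_univ, true_and]

theorem sum_cutW_singleton_le (hw : ∀ e ∈ E, 0 ≤ w e) :
    ∑ v, cutW E w {v} ≤ 2 * ∑ e ∈ E, w e := by
  have hcard : ∀ e : Sym2 V, #{v | Crosses {v} e} ≤ 2 := fun e => by
    induction e with | _ a b
    refine (card_le_card (t := {a, b}) fun v hv => ?_).trans card_le_two
    simp only [mem_filter, mem_univ, crosses_mk, Set.mem_singleton_iff] at hv
    grind
  calc ∑ v, cutW E w {v} = ∑ e ∈ E, #{v | Crosses {v} e} * w e := by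
        simp only [cutW]
        rw [sum_comm]
        simp only [← sum_filter, sum_const, nsmul_eq_mul]
    _ ≤ ∑ e ∈ E, 2 * w e := by
        gcongr with e he
        exacts [hw e he, mod_cast hcard e]
    _ = 2 * ∑ e ∈ E, w e := (mul_sum _ _ _).symm

end CutWeight

section SplittingOff

open Finset

variable {V : Type} {x y : Sym2 V → ℝ} {A X Y : Set V} {c : ℝ} {H : Set (Sym2 V)} {s u v : V}

/-- Splitting off the pair of edges `su`, `sv` by the amount `η`: this much weight is moved from
each of the two edges to the edge `uv`, which is a loop if `u = v`. -/
noncomputable def splitOff (x : Sym2 V → ℝ) (s u v : V) (η : ℝ) : Sym2 V → ℝ :=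
  x + η • (Pi.single s(u, v) 1 - Pi.single s(s, u) 1 - Pi.single s(s, v) 1)

theorem splitOff_nonneg {η : ℝ} (hx : ∀ e, 0 ≤ x e) (hη : 0 ≤ η) (hu : 2 * η ≤ x s(s, u))
    (hv : 2 * η ≤ x s(s, v)) (e : Sym2 V) : 0 ≤ splitOff x s u v η e := by
  have hxe := hx e
  simp only [splitOff, Pi.add_apply, Pi.smul_apply, Pi.sub_apply, Pi.single_apply, smul_eq_mul]
  by_cases heu : e = s(s, u)
  · rw [← heu] at hu
    split_ifs <;> linarith
  by_cases hev : e = s(s, v)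
  · rw [← hev] at hv
    split_ifs <;> linarith
  split_ifs <;> linarith

variable [Fintype V]

theorem cutW_splitOff (η : ℝ) : cutW univ (splitOff x s u v η) A =
    cutW univ x A - if Crosses A s(s, u) ∧ Crosses A s(s, v) then 2 * η else 0 := by
  simp only [splitOff, cutW_add, cutW_smul, cutW_sub, cutW_single]
  by_cases s ∈ A <;> by_cases u ∈ A <;> by_cases v ∈ A <;> simp [crosses_mk, *] <;> ring

/-- The weighting `x` is nonnegative and gives weight at least `c` to every cut separating a pair
of `H`, i.e. all pairs of `H` are `c`-heavy. -/
structure IsHeavy (c : ℝ) (H : Set (Sym2 V)) (x : Sym2 V → ℝ) : Prop where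
  nonneg : ∀ e, 0 ≤ x e
  le_cutW : ∀ A, Separates H A → c ≤ cutW univ x A

theorem cutW_insert_lt (hx : ∀ e, 0 ≤ x e) (hsu : 0 < x s(s, u)) (hu : u ∈ X) (hs : s ∉ X)
    (hX : ∀ v ∉ X, v ≠ s → x s(s, v) = 0) :
    cutW univ x (insert s X) < cutW univ x X := by
  refine sum_lt_sum (fun e _ => ?_) ⟨s(s, u), mem_univ _, by simp [crosses_mk, *]⟩
  split_ifs with hins hcross
  · rfl
  · obtain ⟨a, b, rfl, rfl | ha, hb⟩ := hins
    · exact (hX b (fun h => hb (Or.inr h)) (fun h => hb (Or.inl h))).le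
    · exact absurd ⟨a, b, rfl, ha, fun h => hb (Or.inr h)⟩ hcross
  · exact hx e
  · rfl

theorem IsHeavy.exists_pos_notMem_of_cutW_eq (hx : IsHeavy c H x) (hs : s ∉ terminals H)
    (hsu : 0 < x s(s, u)) (hX : Separates H X) (hXc : cutW univ x X = c) (hu : u ∈ X)
    (hsX : s ∉ X) : ∃ v ∉ X, v ≠ s ∧ 0 < x s(s, v) := by
  by_contra! hno
  have hlt := cutW_insert_lt hx.nonneg hsu hu hsX
    fun v hv hvs => (hno v hv hvs).antisymm (hx.nonneg _)
  linarith [hx.le_cutW _ (hX.insert hs)]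

/-- Uncrossing: the union of two tight sets that both contain `u` but not `s` is tight, as long as
`su` has positive weight. -/
theorem IsHeavy.union_tight (hx : IsHeavy c H x) (hsu : 0 < x s(s, u)) (hX : Separates H X)
    (hXc : cutW univ x X = c) (huX : u ∈ X) (hsX : s ∉ X) (hY : Separates H Y)
    (hYc : cutW univ x Y = c) (huY : u ∈ Y) (hsY : s ∉ Y) :
    Separates H (X ∪ Y) ∧ cutW univ x (X ∪ Y) = c := by
  have hx₀ : ∀ e ∈ univ, 0 ≤ x e := fun e _ => hx.nonneg e
  rcases hX.uncross hY with ⟨hinter, hunion⟩ | ⟨hXY, hYX⟩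
  · have := cutW_inter_add_union_le hx₀ X Y
    exact ⟨hunion, by linarith [hx.le_cutW _ hinter, hx.le_cutW _ hunion]⟩
  · have := cutW_sdiff_add_sdiff_lt hx₀ (mem_univ _) hsu huX huY hsX hsY
    linarith [hx.le_cutW _ hXY, hx.le_cutW _ hYX]

/-- The pair `su`, `sv` can be split off, because no cut separating a pair of `H` and isolating `s`
from `u` and `v` is tight. If no tight set separates `u` from `s`, then `v = u` will do; otherwise
`v` is taken outside a maximal one. -/
theorem IsHeavy.exists_splittable (hx : IsHeavy c H x) (hs : s ∉ terminals H) (hus : u ≠ s)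
    (hsu : 0 < x s(s, u)) :
    ∃ v ≠ s, 0 < x s(s, v) ∧
      ∀ Y, Separates H Y → u ∈ Y → v ∈ Y → s ∉ Y → c < cutW univ x Y := by
  by_cases htight : ∃ X, (Separates H X ∧ cutW univ x X = c) ∧ u ∈ X ∧ s ∉ X
  · obtain ⟨X, hXmax⟩ := (Set.toFinite
      {X | (Separates H X ∧ cutW univ x X = c) ∧ u ∈ X ∧ s ∉ X}).exists_maximal htight
    obtain ⟨⟨hX, hXc⟩, huX, hsX⟩ := hXmax.prop
    obtain ⟨v, hvX, hvs, hsv⟩ := hx.exists_pos_notMem_of_cutW_eq hs hsu hX hXc huX hsX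
    refine ⟨v, hvs, hsv, fun Y hY huY hvY hsY => (hx.le_cutW Y hY).lt_of_ne fun hYc => hvX ?_⟩
    exact hXmax.le_of_ge ⟨hx.union_tight hsu hX hXc huX hsX hY hYc.symm huY hsY, Or.inl huX,
      not_or.2 ⟨hsX, hsY⟩⟩ Set.subset_union_left (Or.inr hvY)
  · exact ⟨u, hus, hsu, fun Y hY huY _ hsY => (hx.le_cutW Y hY).lt_of_ne
      fun hYc => htight ⟨Y, ⟨hY, hYc.symm⟩, huY, hsY⟩⟩

theorem exists_pos_forall_add_le_of_lt {ι : Type*} [Finite ι] (f : ι → ℝ) (c : ℝ) :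
    ∃ ε > 0, ∀ i, c < f i → c + ε ≤ f i := by
  obtain ⟨ε, hε, hlt⟩ := Pi.exists_forall_pos_add_lt (x := fun _ : {i // c < f i} => c)
    (y := fun i => f i) fun i => i.2
  exact ⟨ε, hε, fun i hi => (hlt ⟨i, hi⟩).le⟩

theorem IsHeavy.exists_isHeavy_cutW_lt (hx : IsHeavy c H x) (hs : s ∉ terminals H) (hus : u ≠ s)
    (hsu : 0 < x s(s, u)) :
    ∃ y, IsHeavy c H y ∧ (∀ A, cutW univ y A ≤ cutW univ x A) ∧
      cutW univ y {s} < cutW univ x {s} := by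
  obtain ⟨v, hvs, hsv, hslack⟩ := hx.exists_splittable hs hus hsu
  obtain ⟨ε, hε, hgap⟩ := exists_pos_forall_add_le_of_lt (cutW univ x) c
  obtain ⟨η, hη, hηmin⟩ : ∃ η > 0, 2 * η ≤ min ε (min (x s(s, u)) (x s(s, v))) :=
    ⟨_, half_pos (lt_min hε (lt_min hsu hsv)), by rw [mul_div_cancel₀ _ two_ne_zero]⟩
  obtain ⟨hηε, hηu, hηv⟩ : 2 * η ≤ ε ∧ 2 * η ≤ x s(s, u) ∧ 2 * η ≤ x s(s, v) := by
    simpa only [le_min_iff] using hηmin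
  have hslack' : ∀ A, Separates H A → Crosses A s(s, u) → Crosses A s(s, v) →
      c < cutW univ x A := by
    intro A hA hAu hAv
    by_cases hsA : s ∈ A
    · rw [← cutW_compl]
      simp only [crosses_mk, hsA, true_and, not_true, and_false, or_false] at hAu hAv
      exact hslack _ (separates_compl.2 hA) hAu hAv (not_not.2 hsA)
    · simp only [crosses_mk, hsA, false_and, not_false_iff, and_true, false_or] at hAu hAv
      exact hslack A hA hAu hAv hsA
  refine ⟨splitOff x s u v η, ⟨splitOff_nonneg hx.nonneg hη.le hηu hηv, fun A hA => ?_⟩,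
    fun A => ?_, ?_⟩
  · rw [cutW_splitOff]
    split_ifs with hAuv
    · linarith [hgap A (hslack' A hA hAuv.1 hAuv.2)]
    · linarith [hx.le_cutW A hA]
  · rw [cutW_splitOff]
    split_ifs <;> linarith
  · rw [cutW_splitOff, if_pos ⟨crosses_singleton_left hus, crosses_singleton_left hvs⟩]
    linarith

/-- The loopless weightings that keep the pairs of `H` `c`-heavy and increase no cut of `x`. -/
def heavyReductions (c : ℝ) (H : Set (Sym2 V)) (x : Sym2 V → ℝ) : Set (Sym2 V → ℝ) :=
  {y | IsHeavy c H y ∧ (∀ e : Sym2 V, e.IsDiag → y e = 0) ∧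
    ∀ A, cutW univ y A ≤ cutW univ x A}

theorem indicator_compl_diagSet_mem_heavyReductions (hy : IsHeavy c H y)
    (hyx : ∀ A, cutW univ y A ≤ cutW univ x A) :
    (Sym2.diagSet : Set (Sym2 V))ᶜ.indicator y ∈ heavyReductions c H x := by
  refine ⟨⟨fun e => Set.indicator_nonneg (fun e _ => hy.nonneg e) e, fun A hA => ?_⟩,
    fun e he => Set.indicator_of_notMem (not_not.2 he) y, fun A => ?_⟩
  · rw [cutW_indicator_compl_diagSet]
    exact hy.le_cutW A hA
  · rw [cutW_indicator_compl_diagSet]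
    exact hyx A

theorem heavyReductions_subset_Icc (hx : ∀ e, 0 ≤ x e) :
    heavyReductions c H x ⊆ Set.Icc 0 fun _ => ∑ e : Sym2 V, x e := by
  refine fun y hy => ⟨hy.1.nonneg, fun e => ?_⟩
  obtain ⟨hyH, hloop, hyx⟩ := hy
  induction e with | _ u v
  rcases eq_or_ne v u with rfl | hvu
  · rw [hloop s(v, v) rfl]
    exact sum_nonneg fun e _ => hx e
  · calc y s(u, v) ≤ cutW univ y {u} := le_cutW_of_crosses (fun e _ => hyH.nonneg e)
          (mem_univ _) (crosses_singleton_left hvu)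
      _ ≤ cutW univ x {u} := hyx _
      _ ≤ ∑ e, x e := cutW_le_sum fun e _ => hx e

theorem isClosed_heavyReductions : IsClosed (heavyReductions c H x) := by
  have hset : heavyReductions c H x = ((⋂ e, {y | 0 ≤ y e}) ∩
      ⋂ A, ⋂ (_ : Separates H A), {y | c ≤ cutW univ y A}) ∩
      ((⋂ e : Sym2 V, ⋂ (_ : e.IsDiag), {y | y e = 0}) ∩
        ⋂ A, {y | cutW univ y A ≤ cutW univ x A}) := by
    ext y
    simp only [heavyReductions, Set.mem_ofPred_eq, Set.mem_inter_iff, Set.mem_iInter]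
    exact and_congr_left fun _ => ⟨fun h => ⟨h.1, h.2⟩, fun h => ⟨h.1, h.2⟩⟩
  rw [hset]
  refine .inter (.inter ?_ ?_) (.inter ?_ ?_)
  · exact isClosed_iInter fun e => isClosed_le continuous_const (continuous_apply e)
  · exact isClosed_iInter fun A => isClosed_iInter fun _ =>
      isClosed_le continuous_const (continuous_cutW univ A)
  · exact isClosed_iInter fun e => isClosed_iInter fun _ =>
      isClosed_eq (continuous_apply e) continuous_const
  · exact isClosed_iInter fun A => isClosed_le (continuous_cutW univ A) continuous_const

/-- Splitting off lowers the total weight at the non-terminals, so a weighting minimizing this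
total among the reductions of `x` gives them weight zero. -/
theorem IsHeavy.exists_support_terminals (hx : IsHeavy c H x) :
    ∃ y, IsHeavy c H y ∧ (∀ A, cutW univ y A ≤ cutW univ x A) ∧
      ∀ u v, 0 < y s(u, v) → u ≠ v ∧ u ∈ terminals H ∧ v ∈ terminals H := by
  have hcompact : IsCompact (heavyReductions c H x) :=
    isCompact_Icc.of_isClosed_subset isClosed_heavyReductions
      (heavyReductions_subset_Icc hx.nonneg)
  obtain ⟨y, ⟨hy, hloop, hyx⟩, hmin⟩ := hcompact.exists_isMinOn
    ⟨_, indicator_compl_diagSet_mem_heavyReductions hx fun _ => le_rfl⟩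
    (continuous_finsetSum {s | s ∉ terminals H} fun s _ => continuous_cutW univ {s}).continuousOn
  have hne : ∀ u v, 0 < y s(u, v) → u ≠ v := fun u v huv h => huv.ne' (hloop _ h)
  have hterm : ∀ s u, 0 < y s(s, u) → s ∈ terminals H := by
    intro s u hsu
    by_contra hs
    obtain ⟨z, hz, hzy, hlt⟩ := hy.exists_isHeavy_cutW_lt hs (hne s u hsu).symm hsu
    refine (isMinOn_iff.1 hmin _ (indicator_compl_diagSet_mem_heavyReductions hz
      fun A => (hzy A).trans (hyx A))).not_gt ?_
    simp only [cutW_indicator_compl_diagSet]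
    exact sum_lt_sum (fun v _ => hzy _) ⟨s, mem_filter.2 ⟨mem_univ s, hs⟩, hlt⟩
  exact ⟨y, hy, hyx, fun u v huv => ⟨hne u v huv, hterm u v huv,
    hterm v u (Sym2.eq_swap ▸ huv)⟩⟩

end SplittingOff

section Contraction

open Finset

variable {V W : Type} {x : Sym2 V → ℝ} {φ : V → W} {H : Set (Sym2 V)} {u v : V}

theorem separates_image_map {A : Set W} :
    Separates (Sym2.map φ '' H) A ↔ Separates H (φ ⁻¹' A) := by
  constructor
  · rintro ⟨_, ⟨e, he, rfl⟩, hA⟩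
    exact ⟨e, he, crosses_map.1 hA⟩
  · rintro ⟨e, he, hA⟩
    exact ⟨_, Set.mem_image_of_mem _ he, crosses_map.2 hA⟩

theorem cutTrace_preimage_eq {A B : Set W}
    (h : cutTrace (Sym2.map φ '' H) A = cutTrace (Sym2.map φ '' H) B) :
    cutTrace H (φ ⁻¹' A) = cutTrace H (φ ⁻¹' B) := by
  refine Set.ext fun e => and_congr_right fun he => ?_
  have := Set.ext_iff.1 h (e.map φ)
  simpa only [cutTrace, Set.mem_ofPred_eq, Set.mem_image_of_mem _ he, true_and, crosses_map]
    using this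

theorem preimage_update_id_eq {A : Set V} (h : ¬ Crosses A s(u, v)) :
    Function.update id u v ⁻¹' A = A := by
  ext a
  rcases eq_or_ne a u with rfl | hau
  · rw [crosses_mk] at h
    simp only [Set.mem_preimage, Function.update_self]
    tauto
  · simp only [Set.mem_preimage, Function.update_of_ne hau, id]

theorem terminals_image_map_update_ssubset (huv : u ≠ v) (hu : u ∈ terminals H)
    (hv : v ∈ terminals H) :
    terminals (Sym2.map (Function.update id u v) '' H) ⊂ terminals H := by
  have hsub : terminals (Sym2.map (Function.update id u v) '' H) ⊆ terminals H := by
    intro a ha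
    rcases eq_or_ne u a with rfl | hua
    · exact hu
    rcases eq_or_ne v a with rfl | hva
    · exact hv
    rwa [terminals, Set.mem_ofPred_eq, separates_image_map, preimage_update_id_eq] at ha
    simp only [crosses_mk, Set.mem_singleton_iff, hua, hva, false_and, or_self, not_false_iff]
  have hpre : Function.update id u v ⁻¹' {u} = ∅ := by
    ext a
    rcases eq_or_ne a u with rfl | hau <;> simp [*, huv.symm]
  refine (Set.ssubset_iff_of_subset hsub).2 ⟨u, hu, fun hu' => ?_⟩
  rw [terminals, Set.mem_ofPred_eq, separates_image_map, hpre] at hu'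
  obtain ⟨e, -, a, b, -, ha, -⟩ := hu'
  exact ha

variable [Fintype V]

/-- The weighting induced by `x` on the contraction of the vertices along `φ`: the weights of
parallel edges add up, and contracted edges become loops. -/
noncomputable def mapWeight (φ : V → W) (x : Sym2 V → ℝ) (f : Sym2 W) : ℝ :=
  ∑ e with e.map φ = f, x e

variable [Fintype W]

theorem cutW_mapWeight {A : Set W} :
    cutW univ (mapWeight φ x) A = cutW univ x (φ ⁻¹' A) := by
  simp only [cutW, ← crosses_map]
  rw [← sum_fiberwise univ (Sym2.map φ)]
  refine sum_congr rfl fun f _ => ?_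
  rw [sum_congr rfl fun e he => by rw [(mem_filter.1 he).2]]
  split_ifs
  exacts [rfl, sum_const_zero.symm]

theorem IsHeavy.mapWeight {c : ℝ} (hx : IsHeavy c H x) (φ : V → W) :
    IsHeavy c (Sym2.map φ '' H) (mapWeight φ x) where
  nonneg _ := sum_nonneg fun e _ => hx.nonneg e
  le_cutW A hA := by
    rw [cutW_mapWeight]
    exact hx.le_cutW _ (separates_image_map.1 hA)

end Contraction

section CutCounting

open Finset

variable {V : Type} [Fintype V] {x : Sym2 V → ℝ} {c : ℝ} {H : Set (Sym2 V)}
  {F : Finset (Set V)}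

theorem IsHeavy.mul_ncard_terminals_le (hx : IsHeavy c H x) :
    c * (terminals H).ncard ≤ 2 * ∑ e, x e := by
  have hx₀ : ∀ e ∈ univ, 0 ≤ x e := fun e _ => hx.nonneg e
  calc c * (terminals H).ncard = ∑ _ ∈ (terminals H).toFinset, c := by
        rw [sum_const, nsmul_eq_mul, mul_comm, Set.ncard_eq_toFinset_card']
    _ ≤ ∑ v ∈ (terminals H).toFinset, cutW univ x {v} :=
        sum_le_sum fun v hv => hx.le_cutW _ ((Set.mem_toFinset (s := terminals H)).1 hv)
    _ ≤ ∑ v, cutW univ x {v} := sum_le_univ_sum_of_nonneg fun _ => cutW_nonneg hx₀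
    _ ≤ 2 * ∑ e, x e := sum_cutW_singleton_le hx₀

theorem sum_mul_card_filter_not_crosses (x : Sym2 V → ℝ) (F : Finset (Set V)) :
    ∑ e, x e * #{A ∈ F | ¬ Crosses A e} = ∑ A ∈ F, (∑ e, x e - cutW univ x A) := by
  simp only [cutW, ← sum_sub_distrib]
  rw [sum_comm]
  refine sum_congr rfl fun e _ => ?_
  rw [mul_comm, ← nsmul_eq_mul, ← sum_const, sum_filter]
  refine sum_congr rfl fun A _ => ?_
  split_ifs <;> simp

/-- Karger's contraction argument, averaged: choosing an edge with probability proportional to its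
weight, a cut of weight at most `α c / 2` survives the contraction with probability at least
`1 - α / m`, where `m` is the number of terminals. -/
theorem IsHeavy.card_mul_sub_le (hx : IsHeavy c H x) (hc : 0 < c) {α B : ℝ} (hα : 0 ≤ α)
    (hF : ∀ A ∈ F, cutW univ x A ≤ α * c / 2)
    (hB : ∀ e, 0 < x e → #{A ∈ F | ¬ Crosses A e} ≤ B) :
    #F * ((terminals H).ncard - α) ≤ (terminals H).ncard * B := by
  rcases le_total (#F : ℝ) B with hFB | hBF
  · calc #F * ((terminals H).ncard - α) ≤ #F * (terminals H).ncard := by gcongr; linarith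
      _ ≤ (terminals H).ncard * B := by rw [mul_comm]; gcongr
  set S := ∑ e, x e
  have hsum : #F * (S - α * c / 2) ≤ S * B :=
    calc #F * (S - α * c / 2) = ∑ A ∈ F, (S - α * c / 2) := by rw [sum_const, nsmul_eq_mul]
      _ ≤ ∑ A ∈ F, (S - cutW univ x A) := by gcongr with A hA; exact hF A hA
      _ = ∑ e, x e * #{A ∈ F | ¬ Crosses A e} := (sum_mul_card_filter_not_crosses x F).symm
      _ ≤ ∑ e, x e * B := sum_le_sum fun e _ => by
          rcases (hx.nonneg e).eq_or_lt with h | h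
          · simp [← h]
          · exact mul_le_mul_of_nonneg_left (hB e h) h.le
      _ = S * B := (sum_mul ..).symm
  have hdeg : c * (terminals H).ncard * (#F - B) ≤ 2 * S * (#F - B) :=
    mul_le_mul_of_nonneg_right hx.mul_ncard_terminals_le (sub_nonneg.2 hBF)
  refine le_of_mul_le_mul_left ?_ hc
  linarith

theorem IsHeavy.card_le_two_pow_mul_choose (hx : IsHeavy c H x) (hc : 0 < c) (t j : ℕ)
    (hcard : (terminals H).ncard ≤ t + j) (hF : ∀ A ∈ F, cutW univ x A ≤ t * c / 2)
    (hinj : (F : Set (Set V)).InjOn (cutTrace H)) : #F ≤ 2 ^ t * (t + j).choose t := by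
  induction j generalizing H x F with
  | zero =>
    simpa using (card_le_two_pow_ncard_terminals hinj).trans
      (Nat.pow_le_pow_right two_pos hcard)
  | succ j ih =>
    rcases hcard.lt_or_eq with hlt | hm
    · exact (ih hx (by lia) hF hinj).trans
        (Nat.mul_le_mul_left _ (Nat.choose_le_choose _ (by lia)))
    obtain ⟨y, hy, hyx, hsupp⟩ := hx.exists_support_terminals
    have hcontract : ∀ e, 0 < y e →
        #{A ∈ F | ¬ Crosses A e} ≤ 2 ^ t * (t + j).choose t := by
      intro e he
      induction e with | _ u v
      obtain ⟨huv, hu, hv⟩ := hsupp u v he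
      have hlt := Set.ncard_lt_ncard (terminals_image_map_update_ssubset huv hu hv)
      refine ih (hy.mapWeight (Function.update id u v)) (by lia) (fun A hA => ?_)
        fun A hA B hB hAB => ?_
      · obtain ⟨hA, hAe⟩ := mem_filter.1 hA
        rw [cutW_mapWeight, preimage_update_id_eq hAe]
        exact (hyx A).trans (hF A hA)
      · obtain ⟨hA, hAe⟩ := mem_filter.1 hA
        obtain ⟨hB, hBe⟩ := mem_filter.1 hB
        have htrace := cutTrace_preimage_eq hAB
        rw [preimage_update_id_eq hAe, preimage_update_id_eq hBe] at htrace
        exact hinj hA hB htrace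
    have hmul : #F * (j + 1) ≤ (t + j + 1) * (2 ^ t * (t + j).choose t) := by
      have := hy.card_mul_sub_le hc (Nat.cast_nonneg t) (fun A hA => (hyx A).trans (hF A hA))
        fun e he => Nat.cast_le.2 (hcontract e he)
      rw [hm, Nat.cast_add t, add_sub_cancel_left] at this
      exact_mod_cast this
    have hchoose := Nat.choose_mul_succ_eq (t + j) t
    rw [show t + j + 1 - t = j + 1 by lia] at hchoose
    refine Nat.le_of_mul_le_mul_right (hmul.trans_eq ?_) j.succ_pos
    linear_combination 2 ^ t * hchoose

theorem two_pow_le_factorial {t : ℕ} (ht : 4 ≤ t) : 2 ^ t ≤ t.factorial := by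
  obtain ⟨k, rfl⟩ := Nat.exists_eq_add_of_le ht
  calc 2 ^ (4 + k) = 16 * 2 ^ k := pow_add 2 4 k
    _ ≤ 24 * 5 ^ k := by gcongr <;> norm_num
    _ ≤ (4 + k).factorial := Nat.factorial_mul_pow_le_factorial (m := 4)

theorem IsHeavy.card_le_card_pow (hx : IsHeavy c H x) (hc : 0 < c) {t : ℕ} (ht : 4 ≤ t)
    (hV : 2 ≤ Fintype.card V) (hF : ∀ A ∈ F, cutW univ x A ≤ t * c / 2)
    (hinj : (F : Set (Set V)).InjOn (cutTrace H)) : #F ≤ Fintype.card V ^ t := by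
  have hterm : (terminals H).ncard ≤ Fintype.card V := by
    rw [← Nat.card_eq_fintype_card]
    exact Set.ncard_le_card _
  rcases le_total (Fintype.card V) t with hVt | htV
  · calc #F ≤ 2 ^ (terminals H).ncard := card_le_two_pow_ncard_terminals hinj
      _ ≤ 2 ^ t := by gcongr <;> lia
      _ ≤ Fintype.card V ^ t := by gcongr
  · obtain ⟨j, hj⟩ := Nat.exists_eq_add_of_le htV
    calc #F ≤ 2 ^ t * (Fintype.card V).choose t :=
          hj ▸ hx.card_le_two_pow_mul_choose hc t j (hj ▸ hterm) hF hinj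
      _ ≤ t.factorial * (Fintype.card V).choose t := by gcongr; exact two_pow_le_factorial ht
      _ = (Fintype.card V).descFactorial t := (Nat.descFactorial_eq_factorial_mul_choose _ _).symm
      _ ≤ Fintype.card V ^ t := Nat.descFactorial_le_pow _ _

end CutCounting

section Chernoff

open ProbabilityTheory Real

theorem le_log_one_add {δ : ℝ} (hδ : 0 ≤ δ) :
    2 * (δ / (2 + δ) + (δ / (2 + δ)) ^ 3 / 3) ≤ log (1 + δ) := by
  have hpos : 0 < 2 + δ := by linarith
  have hseries := sum_range_le_log_div (x := δ / (2 + δ)) (by positivity)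
    ((div_lt_one hpos).2 (by linarith)) 2
  have hquot : (1 + δ / (2 + δ)) / (1 - δ / (2 + δ)) = 1 + δ := by
    rw [one_add_div hpos.ne', one_sub_div hpos.ne', div_div_div_cancel_right₀ hpos.ne']
    ring
  norm_num [hquot, Finset.sum_range_succ] at hseries
  linarith

theorem mul_sq_le_one_add_mul_log_sub {δ : ℝ} (hδ₀ : 0 ≤ δ) (hδ₁ : δ ≤ 1) :
    0.38 * δ ^ 2 ≤ (1 + δ) * log (1 + δ) - δ := by
  have hpoly : 0.38 * (2 + δ) ^ 3 ≤ (2 + δ) ^ 2 + 2 / 3 * δ * (1 + δ) := by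
    nlinarith [mul_nonneg hδ₀ (sub_nonneg.2 hδ₁), mul_nonneg (sq_nonneg δ) (sub_nonneg.2 hδ₁)]
  calc 0.38 * δ ^ 2 = δ ^ 2 * (0.38 * (2 + δ) ^ 3) / (2 + δ) ^ 3 := by field_simp
    _ ≤ δ ^ 2 * ((2 + δ) ^ 2 + 2 / 3 * δ * (1 + δ)) / (2 + δ) ^ 3 := by gcongr
    _ = (1 + δ) * (2 * (δ / (2 + δ) + (δ / (2 + δ)) ^ 3 / 3)) - δ := by field_simp; ring
    _ ≤ (1 + δ) * log (1 + δ) - δ := by gcongr; exact le_log_one_add hδ₀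

theorem exp_neg_le_one_sub_add_sq_div_two {δ : ℝ} (hδ : 0 ≤ δ) :
    exp (-δ) ≤ 1 - δ + δ ^ 2 / 2 := by
  have hnonneg : 0 ≤ 1 - δ + δ ^ 2 / 2 := by linarith [sq_nonneg (δ - 1)]
  rw [exp_neg, inv_le_iff_one_le_mul₀ (exp_pos δ)]
  calc 1 ≤ 1 + (δ ^ 2 / 2) ^ 2 := le_add_of_nonneg_right (sq_nonneg _)
    _ = (1 - δ + δ ^ 2 / 2) * (1 + δ + δ ^ 2 / 2) := by ring
    _ ≤ (1 - δ + δ ^ 2 / 2) * exp δ := by gcongr; exact quadratic_le_exp_of_nonneg hδ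

variable {Ω ι : Type*} [MeasurableSpace Ω] {μ : Measure Ω} {X : ι → Ω → ℝ}
  {t : Finset ι} {q δ : ℝ}

theorem sum_integral_nonneg_of_mem_Icc (hX01 : ∀ i, ∀ᵐ ω ∂μ, X i ω ∈ Set.Icc 0 1)
    (t : Finset ι) : 0 ≤ ∑ i ∈ t, μ[X i] :=
  Finset.sum_nonneg fun i _ => integral_nonneg_of_ae ((hX01 i).mono fun _ h => h.1)

variable [IsProbabilityMeasure μ]

theorem mgf_le_exp_of_mem_Icc {X : Ω → ℝ} (hX : AEMeasurable X μ)
    (hX01 : ∀ᵐ ω ∂μ, X ω ∈ Set.Icc 0 1) (s : ℝ) :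
    mgf X μ s ≤ exp (μ[X] * (exp s - 1)) := by
  have hint : Integrable (fun ω => X ω * (exp s - 1)) μ :=
    (Integrable.of_mem_Icc 0 1 hX hX01).mul_const _
  have hconv : ∀ᵐ ω ∂μ, exp (s * X ω) ≤ X ω * (exp s - 1) + 1 := by
    filter_upwards [hX01] with ω ⟨h0, h1⟩
    have := convexOn_exp.2 (Set.mem_univ s) (Set.mem_univ 0) h0 (sub_nonneg.2 h1)
      (add_sub_cancel _ _)
    simp only [smul_eq_mul, mul_zero, add_zero, exp_zero, mul_one] at this
    rw [mul_comm]
    linarith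
  calc mgf X μ s ≤ ∫ ω, (X ω * (exp s - 1) + 1) ∂μ :=
        integral_mono_ae (integrable_exp_mul_of_mem_Icc hX hX01)
          (hint.add (integrable_const 1)) hconv
    _ = μ[X] * (exp s - 1) + 1 := by
        rw [integral_add hint (integrable_const 1), integral_mul_const, integral_const,
          probReal_univ, one_smul]
    _ ≤ exp (μ[X] * (exp s - 1)) := add_one_le_exp _

theorem mgf_sum_le_exp_of_mem_Icc (hindep : iIndepFun X μ) (hX : ∀ i, Measurable (X i))
    (hX01 : ∀ i, ∀ᵐ ω ∂μ, X i ω ∈ Set.Icc 0 1) (t : Finset ι) (s : ℝ) :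
    mgf (∑ i ∈ t, X i) μ s ≤ exp ((∑ i ∈ t, μ[X i]) * (exp s - 1)) := by
  rw [hindep.mgf_sum hX, Finset.sum_mul, exp_sum]
  exact Finset.prod_le_prod (fun i _ => mgf_nonneg)
    fun i _ => mgf_le_exp_of_mem_Icc (hX i).aemeasurable (hX01 i) s

theorem integrable_exp_mul_sum_of_mem_Icc (hindep : iIndepFun X μ) (hX : ∀ i, Measurable (X i))
    (hX01 : ∀ i, ∀ᵐ ω ∂μ, X i ω ∈ Set.Icc 0 1) (t : Finset ι) (s : ℝ) :
    Integrable (fun ω => exp (s * (∑ i ∈ t, X i) ω)) μ :=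
  hindep.integrable_exp_mul_sum hX fun i _ =>
    integrable_exp_mul_of_mem_Icc (hX i).aemeasurable (hX01 i)

theorem measureReal_ge_sum_le_of_mem_Icc (hindep : iIndepFun X μ) (hX : ∀ i, Measurable (X i))
    (hX01 : ∀ i, ∀ᵐ ω ∂μ, X i ω ∈ Set.Icc 0 1) (hq : ∑ i ∈ t, μ[X i] ≤ q)
    (hδ₀ : 0 ≤ δ) (hδ₁ : δ ≤ 1) :
    μ.real {ω | ∑ i ∈ t, μ[X i] + δ * q ≤ (∑ i ∈ t, X i) ω} ≤ exp (-(0.38 * δ ^ 2 * q)) := by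
  set m := ∑ i ∈ t, μ[X i]
  have hq₀ : 0 ≤ q := (sum_integral_nonneg_of_mem_Icc hX01 t).trans hq
  have hlog₀ : 0 ≤ log (1 + δ) := log_nonneg (by linarith)
  have hlog₁ : log (1 + δ) ≤ δ := by linarith [log_le_sub_one_of_pos (by linarith : 0 < 1 + δ)]
  refine (measure_ge_le_exp_mul_mgf _ hlog₀
    (integrable_exp_mul_sum_of_mem_Icc hindep hX hX01 t _)).trans ?_
  calc exp (-log (1 + δ) * (m + δ * q)) * mgf (∑ i ∈ t, X i) μ (log (1 + δ))
      ≤ exp (-log (1 + δ) * (m + δ * q)) * exp (m * (exp (log (1 + δ)) - 1)) := by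
        gcongr
        exact mgf_sum_le_exp_of_mem_Icc hindep hX hX01 t _
    _ = exp ((δ - log (1 + δ)) * m - log (1 + δ) * (δ * q)) := by
        rw [← exp_add, exp_log (by linarith)]
        ring_nf
    _ ≤ exp ((δ - log (1 + δ)) * q - log (1 + δ) * (δ * q)) := by gcongr
    _ = exp (-(((1 + δ) * log (1 + δ) - δ) * q)) := by ring_nf
    _ ≤ exp (-(0.38 * δ ^ 2 * q)) := by gcongr; exact mul_sq_le_one_add_mul_log_sub hδ₀ hδ₁

theorem measureReal_sum_le_le_of_mem_Icc (hindep : iIndepFun X μ) (hX : ∀ i, Measurable (X i))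
    (hX01 : ∀ i, ∀ᵐ ω ∂μ, X i ω ∈ Set.Icc 0 1) (hq : ∑ i ∈ t, μ[X i] ≤ q) (hδ : 0 ≤ δ) :
    μ.real {ω | (∑ i ∈ t, X i) ω ≤ ∑ i ∈ t, μ[X i] - δ * q} ≤ exp (-(δ ^ 2 * q / 2)) := by
  set m := ∑ i ∈ t, μ[X i]
  have hq₀ : 0 ≤ q := (sum_integral_nonneg_of_mem_Icc hX01 t).trans hq
  have hexp : 0 ≤ exp (-δ) - 1 + δ := by linarith [add_one_le_exp (-δ)]
  refine (measure_le_le_exp_mul_mgf _ (neg_nonpos.2 hδ)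
    (integrable_exp_mul_sum_of_mem_Icc hindep hX hX01 t _)).trans ?_
  calc exp (- -δ * (m - δ * q)) * mgf (∑ i ∈ t, X i) μ (-δ)
      ≤ exp (- -δ * (m - δ * q)) * exp (m * (exp (-δ) - 1)) := by
        gcongr
        exact mgf_sum_le_exp_of_mem_Icc hindep hX hX01 t _
    _ = exp ((exp (-δ) - 1 + δ) * m - δ ^ 2 * q) := by
        rw [← exp_add]
        ring_nf
    _ ≤ exp ((exp (-δ) - 1 + δ) * q - δ ^ 2 * q) := by gcongr
    _ ≤ exp (δ ^ 2 / 2 * q - δ ^ 2 * q) := by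
        gcongr
        linarith [exp_neg_le_one_sub_add_sq_div_two hδ]
    _ = exp (-(δ ^ 2 * q / 2)) := by ring_nf

theorem measureReal_le_abs_sum_sub_le_of_mem_Icc (hindep : iIndepFun X μ)
    (hX : ∀ i, Measurable (X i)) (hX01 : ∀ i, ∀ᵐ ω ∂μ, X i ω ∈ Set.Icc 0 1)
    (hq : ∑ i ∈ t, μ[X i] ≤ q) (hδ₀ : 0 ≤ δ) (hδ₁ : δ ≤ 1) :
    μ.real {ω | δ * q ≤ |∑ i ∈ t, X i ω - ∑ i ∈ t, μ[X i]|} ≤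
      2 * exp (-(0.38 * δ ^ 2 * q)) := by
  set m := ∑ i ∈ t, μ[X i]
  have hq₀ : 0 ≤ q := (sum_integral_nonneg_of_mem_Icc hX01 t).trans hq
  calc μ.real {ω | δ * q ≤ |∑ i ∈ t, X i ω - m|}
      ≤ μ.real ({ω | m + δ * q ≤ (∑ i ∈ t, X i) ω} ∪
          {ω | (∑ i ∈ t, X i) ω ≤ m - δ * q}) := by
        refine measureReal_mono fun ω hω => ?_
        simp only [Set.mem_union, Set.mem_ofPred_eq, Finset.sum_apply, le_abs] at hω ⊢
        exact hω.imp (fun _ => by linarith) fun _ => by linarith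
    _ ≤ exp (-(0.38 * δ ^ 2 * q)) + exp (-(δ ^ 2 * q / 2)) :=
        (measureReal_union_le _ _).trans (add_le_add
          (measureReal_ge_sum_le_of_mem_Icc hindep hX hX01 hq hδ₀ hδ₁)
          (measureReal_sum_le_le_of_mem_Icc hindep hX hX01 hq hδ₀))
    _ ≤ 2 * exp (-(0.38 * δ ^ 2 * q)) := by
        rw [two_mul]
        gcongr
        linarith [mul_nonneg (sq_nonneg δ) hq₀]

end Chernoff

section UnionBound

open Finset

theorem exp_neg_mul_le_inv_pow_floor {n ζ : ℕ} {a c q : ℝ} (hn : 0 < n) (hc : 0 < c) (hq : c ≤ q)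
    (ha : ζ * Real.log n ≤ a * c) :
    Real.exp (-(a * q)) ≤ ((n : ℝ) ^ (ζ * (⌊q / c - 1⌋₊ + 1)))⁻¹ := by
  have ha₀ : 0 ≤ a := by
    have := Real.log_natCast_nonneg n
    exact nonneg_of_mul_nonneg_left ((by positivity : 0 ≤ ζ * Real.log n).trans ha) hc
  have hfloor : (⌊q / c - 1⌋₊ + 1) * c ≤ q := by
    rw [← le_div_iff₀ hc, ← le_sub_iff_add_le]
    exact Nat.floor_le (sub_nonneg.2 ((one_le_div hc).2 hq))
  have hlevel : (ζ * (⌊q / c - 1⌋₊ + 1) : ℕ) * Real.log n ≤ a * q := by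
    calc (ζ * (⌊q / c - 1⌋₊ + 1) : ℕ) * Real.log n
        = (⌊q / c - 1⌋₊ + 1) * (ζ * Real.log n) := by push_cast; ring
      _ ≤ (⌊q / c - 1⌋₊ + 1) * (a * c) := by gcongr
      _ = a * ((⌊q / c - 1⌋₊ + 1) * c) := by ring
      _ ≤ a * q := by gcongr
  rw [Real.exp_neg]
  refine inv_anti₀ (by positivity) ?_
  rwa [← Real.log_le_iff_le_exp (by positivity), Real.log_pow]

theorem sum_inv_pow_le {α : Type*} {G : Finset α} {f : α → ℕ} {n : ℕ} (z : ℕ) (hn : 2 ≤ n)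
    (hcard : ∀ k, #{a ∈ G | f a = k} ≤ n ^ (2 * k + 4)) :
    ∑ a ∈ G, ((n : ℝ) ^ ((z + 4) * (f a + 1)))⁻¹ ≤ 2 / (n : ℝ) ^ z := by
  have hn₂ : (2 : ℝ) ≤ n := by exact_mod_cast hn
  have hlevel : ∀ k, ∑ a ∈ G with f a = k, ((n : ℝ) ^ ((z + 4) * (f a + 1)))⁻¹ ≤
      ((n : ℝ) ^ z)⁻¹ * (1 / 2) ^ k := fun k =>
    calc ∑ a ∈ G with f a = k, ((n : ℝ) ^ ((z + 4) * (f a + 1)))⁻¹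
        = #{a ∈ G | f a = k} * ((n : ℝ) ^ ((z + 4) * (k + 1)))⁻¹ := by
          rw [← nsmul_eq_mul]
          exact sum_eq_card_nsmul fun a ha => by rw [(mem_filter.1 ha).2]
      _ ≤ (n : ℝ) ^ (2 * k + 4) * ((n : ℝ) ^ ((z + 4) * (k + 1)))⁻¹ := by
          gcongr
          exact_mod_cast hcard k
      _ = ((n : ℝ) ^ z)⁻¹ * ((n : ℝ) ^ ((z + 2) * k))⁻¹ := by
          rw [show (z + 4) * (k + 1) = 2 * k + 4 + (z + (z + 2) * k) by ring,
            pow_add (n : ℝ) (2 * k + 4), pow_add (n : ℝ) z]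
          field_simp
      _ ≤ ((n : ℝ) ^ z)⁻¹ * ((n : ℝ) ^ k)⁻¹ := by
          gcongr
          · linarith
          · exact Nat.le_mul_of_pos_left k (by lia)
      _ ≤ ((n : ℝ) ^ z)⁻¹ * (1 / 2) ^ k := by
          rw [one_div, inv_pow]
          gcongr
  calc ∑ a ∈ G, ((n : ℝ) ^ ((z + 4) * (f a + 1)))⁻¹
      = ∑ k ∈ G.image f, ∑ a ∈ G with f a = k, ((n : ℝ) ^ ((z + 4) * (f a + 1)))⁻¹ :=
        (sum_fiberwise_of_maps_to (fun a ha => mem_image_of_mem f ha) _).symm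
    _ ≤ ∑ k ∈ G.image f, ((n : ℝ) ^ z)⁻¹ * (1 / 2) ^ k := sum_le_sum fun k _ => hlevel k
    _ ≤ ((n : ℝ) ^ z)⁻¹ * 2 := by
        rw [← mul_sum]
        gcongr
        exact (summable_geometric_two.sum_le_tsum _ fun _ _ => by positivity).trans_eq
          tsum_geometric_two
    _ = 2 / (n : ℝ) ^ z := inv_mul_eq_div _ _

theorem IsHeavy.sum_exp_neg_mul_cutW_le {V : Type} [Fintype V] {x : Sym2 V → ℝ} {a c : ℝ}
    {H : Set (Sym2 V)} {F : Finset (Set V)} {ζ : ℕ} (hx : IsHeavy c H x) (hc : 0 < c)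
    (hV : 2 ≤ Fintype.card V) (hsep : ∀ A ∈ F, Separates H A)
    (hinj : (F : Set (Set V)).InjOn (cutTrace H)) (hζ : 4 ≤ ζ)
    (ha : ζ * Real.log (Fintype.card V) ≤ a * c) :
    ∑ A ∈ F, Real.exp (-(a * cutW univ x A)) ≤ 2 / (Fintype.card V : ℝ) ^ (ζ - 4) := by
  obtain ⟨z, rfl⟩ := Nat.exists_eq_add_of_le' hζ
  have hcard (k : ℕ) :
      #{A ∈ F | ⌊cutW univ x A / c - 1⌋₊ = k} ≤ Fintype.card V ^ (2 * k + 4) := by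
    refine hx.card_le_card_pow hc (by lia) hV (fun A hA => ?_)
      (hinj.mono (coe_subset.2 (filter_subset _ _)))
    have hlt := Nat.lt_floor_add_one (cutW univ x A / c - 1)
    rw [(mem_filter.1 hA).2, sub_lt_iff_lt_add, div_lt_iff₀ hc] at hlt
    push_cast
    linarith
  exact (sum_le_sum fun A hA => exp_neg_mul_le_inv_pow_floor (by lia) hc
    (hx.le_cutW A (hsep A hA)) ha).trans (sum_inv_pow_le z hV hcard)

theorem exists_finset_injOn_forall_exists_le {α β : Type*} [Finite α] (f : α → β) (q : α → ℝ) :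
    ∃ G : Finset α, (G : Set α).InjOn f ∧ ∀ a, ∃ b ∈ G, f b = f a ∧ q b ≤ q a := by
  have hmin : ∀ y : Set.range f, ∃ b, f b = y ∧ ∀ a, f a = y → q b ≤ q a := by
    rintro ⟨_, a, rfl⟩
    exact Set.exists_min_image {b | f b = f a} q (Set.toFinite _) ⟨a, rfl⟩
  choose g hg hgq using hmin
  have := Fintype.ofFinite (Set.range f)
  refine ⟨univ.image g, ?_, fun a => ⟨g ⟨f a, a, rfl⟩, mem_image_of_mem _ (mem_univ _), hg _,
    hgq _ a rfl⟩⟩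
  simp only [coe_image, coe_univ, Set.image_univ]
  rintro _ ⟨y, rfl⟩ _ ⟨z, rfl⟩ hyz
  rw [hg, hg] at hyz
  rw [Subtype.ext hyz]

end UnionBound

section Sampling

open Finset

theorem isProbabilityMeasure_bernoulliMeasure {p : ℝ} (hp₀ : 0 ≤ p) (hp₁ : p ≤ 1) :
    IsProbabilityMeasure (bernoulliMeasure p) := by
  constructor
  simp only [bernoulliMeasure, Measure.add_apply, Measure.smul_apply, measure_univ, smul_eq_mul,
    mul_one]
  rw [← ENNReal.ofReal_add hp₀ (sub_nonneg.2 hp₁), add_sub_cancel, ENNReal.ofReal_one]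

theorem integral_bernoulliMeasure {p : ℝ} (hp₀ : 0 ≤ p) (hp₁ : p ≤ 1) (f : Bool → ℝ) :
    ∫ b, f b ∂bernoulliMeasure p = p * f true + (1 - p) * f false := by
  rw [bernoulliMeasure, integral_add_measure, integral_smul_measure, integral_smul_measure,
    integral_dirac, integral_dirac, ENNReal.toReal_ofReal hp₀,
    ENNReal.toReal_ofReal (sub_nonneg.2 hp₁), smul_eq_mul, smul_eq_mul]
  all_goals exact Integrable.of_finite.smul_measure ENNReal.ofReal_ne_top

theorem measureReal_le_abs_sum_sub_sum_div_le {ι : Type*} [Fintype ι] {a : ι → ℝ} {p q δ : ℝ}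
    (hp₀ : 0 < p) (hp₁ : p ≤ 1) (ha : ∀ i, a i ∈ Set.Icc 0 1) (hq : ∑ i, a i ≤ q)
    (hδ₀ : 0 ≤ δ) (hδ₁ : δ ≤ 1) :
    (Measure.pi fun _ : ι => bernoulliMeasure p).real
      {ω | δ * q ≤ |∑ i, a i - ∑ i, if ω i = true then a i / p else 0|} ≤
      2 * Real.exp (-(0.38 * (δ ^ 2 * p) * q)) := by
  have := isProbabilityMeasure_bernoulliMeasure hp₀.le hp₁
  let X (i : ι) (b : Bool) : ℝ := if b = true then a i else 0
  have hX01 (i : ι) (b : Bool) : X i b ∈ Set.Icc 0 1 := by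
    dsimp only [X]
    split_ifs
    exacts [ha i, ⟨le_rfl, zero_le_one⟩]
  have hindep : ProbabilityTheory.iIndepFun (fun i (ω : ι → Bool) => X i (ω i))
      (Measure.pi fun _ => bernoulliMeasure p) :=
    ProbabilityTheory.iIndepFun_pi fun i => (measurable_of_finite (X i)).aemeasurable
  have hmean : ∑ i, ∫ ω, X i (ω i) ∂(Measure.pi fun _ : ι => bernoulliMeasure p) =
      p * ∑ i, a i := by
    rw [mul_sum]
    refine sum_congr rfl fun i _ => ?_
    rw [integral_comp_eval (measurable_of_finite (X i)).aestronglyMeasurable,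
      integral_bernoulliMeasure hp₀.le hp₁]
    simp [X]
  have hscale (ω : ι → Bool) :
      ∑ i, X i (ω i) = p * ∑ i, if ω i = true then a i / p else 0 := by
    rw [mul_sum]
    refine sum_congr rfl fun i _ => ?_
    rw [mul_ite, mul_zero, mul_div_cancel₀ _ hp₀.ne']
  have hchernoff := measureReal_le_abs_sum_sub_le_of_mem_Icc hindep
    (fun i => measurable_of_finite _) (fun i => ae_of_all _ fun ω => hX01 i (ω i))
    (t := univ) (q := p * q) (hmean.trans_le (by gcongr)) hδ₀ hδ₁
  rw [show 0.38 * (δ ^ 2 * p) * q = 0.38 * δ ^ 2 * (p * q) by ring]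
  refine (congrArg (Measure.real _) (Set.ext fun ω => ?_)).trans_le hchernoff
  rw [Set.mem_ofPred_eq, Set.mem_ofPred_eq, hmean, hscale, ← mul_sub, abs_mul, abs_of_pos hp₀,
    abs_sub_comm, mul_left_comm, mul_le_mul_iff_right₀ hp₀]

variable {V : Type} {R Q : Finset (Sym2 V)} {w : Sym2 V → ℝ} {p q δ : ℝ} {A B : Set V}

/-- The weight `r̂^{(C)}` of the cut `C` induced by `A` in the sample `ω` of the edges of `R`. -/
noncomputable def sampledCutW (R : Finset (Sym2 V)) (w : Sym2 V → ℝ) (p : ℝ) (A : Set V)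
    (ω : {e // e ∈ R} → Bool) : ℝ :=
  ∑ e ∈ R.attach, if Crosses A e.1 ∧ ω e = true then w e.1 / p else 0

theorem cutW_congr (h : cutTrace R A = cutTrace R B) : cutW R w A = cutW R w B :=
  sum_congr rfl fun e he => if_congr ((and_congr_right_iff.1 (Set.ext_iff.1 h e)) he) rfl rfl

theorem sampledCutW_congr (h : cutTrace R A = cutTrace R B) :
    sampledCutW R w p A = sampledCutW R w p B :=
  funext fun _ => sum_congr rfl fun e _ =>
    if_congr (and_congr_left fun _ => (and_congr_right_iff.1 (Set.ext_iff.1 h e)) e.2) rfl rfl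

theorem sampledCutW_eq_zero_of_not_separates (hA : ¬ Separates R A) :
    sampledCutW R w p A = 0 :=
  funext fun _ => sum_eq_zero fun e _ => if_neg fun h => hA ⟨e, e.2, h.1⟩

theorem measureReal_le_abs_cutW_sub_sampledCutW_le (hw : ∀ e ∈ R, w e ∈ Set.Icc 0 1)
    (hp₀ : 0 < p) (hp₁ : p ≤ 1) (hδ₀ : 0 ≤ δ) (hδ₁ : δ ≤ 1) (hq : cutW R w A ≤ q) :
    (Measure.pi fun _ : {e // e ∈ R} => bernoulliMeasure p).real
      {ω | δ * q ≤ |cutW R w A - sampledCutW R w p A ω|} ≤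
      2 * Real.exp (-(0.38 * (δ ^ 2 * p) * q)) := by
  have hmean : ∑ e : {e // e ∈ R}, (if Crosses A e then w e else 0) = cutW R w A :=
    sum_coe_sort R fun e => if Crosses A e then w e else 0
  have hbernoulli := measureReal_le_abs_sum_sub_sum_div_le hp₀ hp₁ (q := q) (fun e => ?_)
    (hmean.trans_le hq) hδ₀ hδ₁
  · rw [hmean] at hbernoulli
    simpa only [sampledCutW, univ_eq_attach, ← ite_and, and_comm, ite_div, zero_div]
      using hbernoulli
  · split_ifs
    exacts [hw e e.2, ⟨le_rfl, zero_le_one⟩]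

/-- Among the cuts with a given trace on `R`, all sharing the same deviation, the one of least
weight in `Q` is the most restrictive. -/
theorem exists_representatives_of_deviation [Finite V] (hw : ∀ e ∈ Q, 0 ≤ w e) (hδ : 0 ≤ δ) :
    ∃ F : Finset (Set V), (∀ A ∈ F, Separates R A) ∧
      (F : Set (Set V)).InjOn (cutTrace R) ∧
      ∀ ω A, δ * cutW Q w A < |cutW R w A - sampledCutW R w p A ω| →
        ∃ B ∈ F, δ * cutW Q w B ≤ |cutW R w B - sampledCutW R w p B ω| := by
  obtain ⟨G, hinj, hmin⟩ :=
    exists_finset_injOn_forall_exists_le (cutTrace (R : Set (Sym2 V))) (cutW Q w)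
  refine ⟨{A ∈ G | Separates R A}, fun A hA => (mem_filter.1 hA).2,
    hinj.mono (coe_subset.2 (filter_subset _ _)), fun ω A hA => ?_⟩
  have hsep : Separates R A := by
    by_contra hsep
    rw [cutW_eq_zero_of_not_separates hsep, sampledCutW_eq_zero_of_not_separates hsep,
      Pi.zero_apply, sub_zero, abs_zero] at hA
    exact hA.not_ge (mul_nonneg hδ (cutW_nonneg hw))
  obtain ⟨B, hB, htrace, hBA⟩ := hmin A
  refine ⟨B, mem_filter.2 ⟨hB, by rwa [Separates, htrace]⟩, ?_⟩
  rw [cutW_congr htrace, sampledCutW_congr htrace]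
  exact (mul_le_mul_of_nonneg_left hBA hδ).trans hA.le

theorem measureReal_exists_lt_abs_cutW_sub_sampledCutW_le [Fintype V] {π : ℝ} {ζ : ℕ}
    (hV : 2 ≤ Fintype.card V) (hRQ : R ⊆ Q) (hw : ∀ e ∈ Q, w e ∈ Set.Icc 0 1)
    (hheavy : ∀ A, Separates R A → π ≤ cutW Q w A) (hp₀ : 0 < p) (hp₁ : p ≤ 1) (hζ : 4 ≤ ζ)
    (hδ₀ : 0 < δ) (hδ₁ : δ ≤ 1)
    (hcond : ζ * Real.log (Fintype.card V) / 0.38 ≤ δ ^ 2 * p * π) :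
    (Measure.pi fun _ : {e // e ∈ R} => bernoulliMeasure p).real
      {ω | ∃ A, δ * cutW Q w A < |cutW R w A - sampledCutW R w p A ω|} ≤
      4 / (Fintype.card V : ℝ) ^ (ζ - 4) := by
  have := isProbabilityMeasure_bernoulliMeasure hp₀.le hp₁
  let μ := Measure.pi fun _ : {e // e ∈ R} => bernoulliMeasure p
  have : IsProbabilityMeasure μ := inferInstanceAs (IsProbabilityMeasure (Measure.pi _))
  have hlog : 0 < ζ * Real.log (Fintype.card V) :=
    mul_pos (by exact_mod_cast (by lia : 0 < ζ)) (Real.log_pos (by exact_mod_cast hV))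
  have hπ : 0 < π :=
    pos_of_mul_pos_right ((by positivity : _ < _).trans_le hcond) (by positivity)
  have hw₀ : ∀ e ∈ Q, 0 ≤ w e := fun e he => (hw e he).1
  have hx : IsHeavy π R ((Q : Set (Sym2 V)).indicator w) :=
    ⟨fun e => Set.indicator_nonneg hw₀ e, fun A hA => by
      rw [cutW_indicator]
      exact hheavy A hA⟩
  obtain ⟨F, hsep, hinj, hrep⟩ := exists_representatives_of_deviation (R := R) (p := p) hw₀ hδ₀.le
  calc μ.real {ω | ∃ A, δ * cutW Q w A < |cutW R w A - sampledCutW R w p A ω|}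
      ≤ μ.real (⋃ A ∈ F, {ω | δ * cutW Q w A ≤ |cutW R w A - sampledCutW R w p A ω|}) :=
        measureReal_mono (fun ω ⟨A, hA⟩ => Set.mem_iUnion₂.2 (by simpa using hrep ω A hA))
          (measure_ne_top _ _)
    _ ≤ ∑ A ∈ F, μ.real {ω | δ * cutW Q w A ≤ |cutW R w A - sampledCutW R w p A ω|} :=
        measureReal_biUnion_finset_le _ _
    _ ≤ ∑ A ∈ F, 2 * Real.exp (-(0.38 * (δ ^ 2 * p) * cutW Q w A)) :=
        sum_le_sum fun A _ => measureReal_le_abs_cutW_sub_sampledCutW_le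
          (fun e he => hw e (hRQ he)) hp₀ hp₁ hδ₀.le hδ₁ (cutW_mono hRQ hw₀)
    _ ≤ 2 * (2 / (Fintype.card V : ℝ) ^ (ζ - 4)) := by
        rw [← mul_sum]
        gcongr
        simp only [← cutW_indicator (E := Q)]
        refine hx.sum_exp_neg_mul_cutW_le hπ hV hsep hinj hζ ?_
        rwa [div_le_iff₀' (by norm_num), ← mul_assoc] at hcond
    _ = 4 / (Fintype.card V : ℝ) ^ (ζ - 4) := by ring

end Sampling

/-- **Cut preservation under independent edge sampling (Lemma 4.4).**
Let `R ⊆ Q` be edge sets on `n ≥ 2` vertices with weights in `(0,1]` such that every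
edge of `R` is `π`-heavy in `(V,Q)`.  Sample each edge of `R` independently with
probability `p`, giving weight `w(e)/p` to sampled edges.  If `ζ ≥ 5` and
`δ ∈ (0,1]` satisfy `δ²·p·π ≥ ζ·ln(n)/0.38`, then with probability at least
`1 − 4/n^{ζ−4}`, simultaneously for all cuts `C`: `|r^{(C)} − r̂^{(C)}| ≤ δ·q^{(C)}`. -/
theorem stmt_11 {V : Type} [Fintype V] [DecidableEq V]
    (R Q : Finset (Sym2 V)) (w : Sym2 V → ℝ) (π p δ : ℝ) (ζ : ℕ)
    (hn : 2 ≤ Fintype.card V)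
    (hdiag : ∀ e ∈ Q, ¬ e.IsDiag)
    (hRQ : R ⊆ Q)
    (hw : ∀ e ∈ Q, 0 < w e ∧ w e ≤ 1)
    (hheavy : ∀ e ∈ R, ∀ u v : V, e = s(u, v) →
      ∀ A : Set V, u ∈ A → v ∉ A → π ≤ cutW Q w A)
    (hp0 : 0 < p) (hp1 : p ≤ 1)
    (hζ : 5 ≤ ζ)
    (hδ0 : 0 < δ) (hδ1 : δ ≤ 1)
    (hcond : (ζ : ℝ) * Real.log (Fintype.card V) / 0.38 ≤ δ ^ 2 * p * π) :
    1 - 4 / (Fintype.card V : ℝ) ^ (ζ - 4) ≤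
      ((Measure.pi fun _ : {e // e ∈ R} => bernoulliMeasure p)
        {ω : {e // e ∈ R} → Bool | ∀ A : Set V, A.Nonempty → Aᶜ.Nonempty →
          |cutW R w A -
              ∑ e ∈ R.attach, (if Crosses A e.1 ∧ ω e = true then w e.1 / p else 0)|
            ≤ δ * cutW Q w A}).toReal := by
  have := isProbabilityMeasure_bernoulliMeasure hp0.le hp1
  have hbad := measureReal_exists_lt_abs_cutW_sub_sampledCutW_le hn hRQ
    (fun e he => ⟨(hw e he).1.le, (hw e he).2⟩)
    (fun A ⟨e, he, u, v, huv, hu, hv⟩ => hheavy e he u v huv A hu hv)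
    hp0 hp1 (by lia) hδ0 hδ1 hcond
  refine (sub_le_sub_left hbad 1).trans ?_
  rw [← probReal_compl_eq_one_sub (Set.toFinite _).measurableSet, ← measureReal_def]
  exact measureReal_mono fun ω hω A _ _ => not_lt.1 fun h => hω ⟨A, h⟩
end
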